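/- arXiv:2010.00653 — 4 statements merged into one kernel-verified Lean document; each statement's English description precedes it below -/
import Mathlib

section
/- Let n >= 1 and let I_n denote the set of involutions w in S_infty with w(i) = i for all i > n. For z in I_n with fixed points i_1 < i_2 < ... < i_k in [n], define FPF_n(z) to be the composition z * (i_1,n+1)(i_2,n+2)...(i_k,n+k) * c, where (a,b) denotes a transposition and c is the involution swapping n+k+2t-1 and n+k+2t for every t >= 1 and fixing all other points. Then FPF_n(z) belongs to I^FPF_infty for every z in I_n, and the map FPF_n is a bijection from I_n onto the set of those elements of I^FPF_infty that have no visible descent greater than n. -/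
namespace Paper

/-!
We model a permutation of the positive integers `{1, 2, 3, ...}` as an `Equiv.Perm ℕ`
that fixes `0`; all notions below refer only to positive inputs.
-/

/-- The rank `r_w(i,j) = #{a ∈ [i] : w(a) ∈ [j]}` of the `i × j` partial
permutation matrix of `w`, where `[k] = {1, ..., k}`. -/
def rnk (w : Equiv.Perm ℕ) (i j : ℕ) : ℕ :=
  ((Finset.Icc 1 i).filter fun a => w a ∈ Finset.Icc 1 j).card

/-- Right descent set `Des_R(w) = {i ≥ 1 : w(i) > w(i+1)}`. -/
def DesR (w : Equiv.Perm ℕ) : Set ℕ := {i | 1 ≤ i ∧ w (i + 1) < w i}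

/-- Left descent set `Des_L(w) = Des_R(w⁻¹)`. -/
def DesL (w : Equiv.Perm ℕ) : Set ℕ := DesR w⁻¹

/-- `S_∞`: permutations of the positive integers fixing all but finitely many points. -/
def SInfty : Set (Equiv.Perm ℕ) :=
  {w | w 0 = 0 ∧ Set.Finite {i : ℕ | w i ≠ i}}

/-- `S^{m,n}_∞ = {w ∈ S_∞ : Des_R(w) ⊆ [m], Des_L(w) ⊆ [n]}`. -/
def SmnInfty (m n : ℕ) : Set (Equiv.Perm ℕ) :=
  {w | w ∈ SInfty ∧ DesR w ⊆ Set.Icc 1 m ∧ DesL w ⊆ Set.Icc 1 n}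

/-- The Rothe diagram `D(w) = {(i,j) : 0 < j < w(i), 0 < i < w⁻¹(j)}`. -/
def Rothe (w : Equiv.Perm ℕ) : Set (ℕ × ℕ) :=
  {p | 0 < p.2 ∧ p.2 < w p.1 ∧ 0 < p.1 ∧ p.1 < w⁻¹ p.2}

/-- The function `1_FPF`, sending `i ↦ i - (-1)^i` on positive integers (it fixes `0`). -/
def oneFPF : ℕ → ℕ := fun i => if i % 2 = 1 then i + 1 else i - 1

/-- `I^FPF_∞`: fixed-point-free involutions of the positive integers agreeing with
`1_FPF` at all sufficiently large inputs. -/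
def IFPFInfty : Set (Equiv.Perm ℕ) :=
  {z | z 0 = 0 ∧ (∀ i, 1 ≤ i → z i ≠ i) ∧ z * z = 1 ∧ ∃ N, ∀ i, N ≤ i → z i = oneFPF i}

/-- The skew-symmetric Rothe diagram `D^ss(z) = {(i,j) : 0 < j < z(i), j < i < z(j)}`. -/
def Dss (z : Equiv.Perm ℕ) : Set (ℕ × ℕ) :=
  {p | 0 < p.2 ∧ p.2 < z p.1 ∧ p.2 < p.1 ∧ p.1 < z p.2}

/-- `FPF_n(I_n) = {z ∈ I^FPF_∞ : D^ss(z) ⊆ [n] × [n]}`. -/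
def FPFIn (n : ℕ) : Set (Equiv.Perm ℕ) :=
  {z | z ∈ IFPFInfty ∧ Dss z ⊆ Set.Icc 1 n ×ˢ Set.Icc 1 n}

/-- `ℓ_fpf(z) = |D^ss(z)|`. -/
noncomputable def ellFpf (z : Equiv.Perm ℕ) : ℕ := (Dss z).ncard

/-- Bruhat order on `I^FPF_∞`: reflexive-transitive closure of `z < (i,j) z (i,j)`
whenever `i < j` and `ℓ_fpf` goes up by exactly one. -/
def fpfBruhatLe (z y : Equiv.Perm ℕ) : Prop :=
  Relation.ReflTransGen
    (fun a b => ∃ i j : ℕ, 1 ≤ i ∧ i < j ∧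
      b = Equiv.swap i j * a * Equiv.swap i j ∧ ellFpf b = ellFpf a + 1) z y

/-- `i` is a visible descent of `z` if `i ≥ 1` and `z(i+1) < min(i, z(i))`. -/
def visibleDescent (z : Equiv.Perm ℕ) (i : ℕ) : Prop :=
  1 ≤ i ∧ z (i + 1) < min i (z i)

/-- `Ψ(z, p) = {(p,r) z (p,r) : r > p, ℓ_fpf((p,r) z (p,r)) = ℓ_fpf(z) + 1}`. -/
def PsiSet (z : Equiv.Perm ℕ) (p : ℕ) : Set (Equiv.Perm ℕ) :=
  {y | ∃ r : ℕ, p < r ∧ y = Equiv.swap p r * z * Equiv.swap p r ∧ ellFpf y = ellFpf z + 1}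

/-- The dominant component `dom(z) = {(i,j) : i, j ≥ 1, r_z(i,j) = 0}`. -/
def domSet (z : Equiv.Perm ℕ) : Set (ℕ × ℕ) :=
  {p | 1 ≤ p.1 ∧ 1 ≤ p.2 ∧ rnk z p.1 p.2 = 0}

/-- `(p, q)` is an outer corner of `dom(z)`. -/
def IsOuterCorner (z : Equiv.Perm ℕ) (p q : ℕ) : Prop :=
  1 ≤ p ∧ 1 ≤ q ∧ (p, q) ∉ domSet z ∧
    (p = 1 ∨ (p - 1, q) ∈ domSet z) ∧ (q = 1 ∨ (p, q - 1) ∈ domSet z)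

/-- `I_n`: involutions in `S_∞` fixing every `i > n`. -/
def InvolIn (n : ℕ) : Set (Equiv.Perm ℕ) :=
  {w | w 0 = 0 ∧ w * w = 1 ∧ ∀ i, n < i → w i = i}

/-- The fixed points of `z` lying in `[n]`. -/
def fixedPtsIn (n : ℕ) (z : Equiv.Perm ℕ) : Finset ℕ :=
  (Finset.Icc 1 n).filter fun i => z i = i

/-- The function swapping `m + 2t - 1` and `m + 2t` for every `t ≥ 1`, fixing all other points. -/
def tailSwapFun (m : ℕ) : ℕ → ℕ := fun i =>
  if i ≤ m then i else if (i - m) % 2 = 1 then i + 1 else i - 1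

theorem tailSwapFun_involutive (m : ℕ) : Function.Involutive (tailSwapFun m) := by
  intro i
  unfold tailSwapFun
  split_ifs <;> omega

/-- The involution swapping `m + 2t - 1` and `m + 2t` for every `t ≥ 1`. -/
def tailSwap (m : ℕ) : Equiv.Perm ℕ :=
  Function.Involutive.toPerm _ (tailSwapFun_involutive m)

/-- The fixed-point-free standardization `FPF_n(z) = z ⋅ (i_1,n+1)⋯(i_k,n+k) ⋅ c`,
where `i_1 < ⋯ < i_k` are the fixed points of `z` in `[n]` and `c` swaps
`n+k+2t-1, n+k+2t` for all `t ≥ 1`. -/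
noncomputable def fpfStd (n : ℕ) (z : Equiv.Perm ℕ) : Equiv.Perm ℕ :=
  z *
    (List.ofFn fun t : Fin (fixedPtsIn n z).card =>
      Equiv.swap ((fixedPtsIn n z).orderEmbOfFin rfl t) (n + (t : ℕ) + 1)).prod *
    tailSwap (n + (fixedPtsIn n z).card)

/-- `Mat^ss_n(K)`: skew-symmetric `n × n` matrices (transpose is the negative, zero diagonal).
Row/column index `a : Fin n` corresponds to the (1-indexed) row/column `a + 1`. -/
def MatSS (K : Type*) [CommRing K] (n : ℕ) : Set (Matrix (Fin n) (Fin n) K) :=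
  {A | A.transpose = -A ∧ ∀ i, A i i = 0}

/-- The skew-symmetric matrix Schubert variety
`X^ss_z = {A ∈ Mat^ss_n : rank A_{[i][j]} ≤ r_z(i,j) for all i, j ∈ [n]}`. -/
noncomputable def Xss (K : Type*) [Field K] (n : ℕ) (z : Equiv.Perm ℕ) :
    Set (Matrix (Fin n) (Fin n) K) :=
  {A | A ∈ MatSS K n ∧ ∀ (i j : ℕ) (hi : i ≤ n) (hj : j ≤ n), 1 ≤ i → 1 ≤ j →
    (A.submatrix (Fin.castLE hi) (Fin.castLE hj)).rank ≤ rnk z i j}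

/-- `#{(i,j) : i > j, j < z(i), i < z(j)}` for a permutation of `Fin N`
(the `0`-indexed version of `ℓ_fpf`). -/
def ellFpfFin {N : ℕ} (z : Equiv.Perm (Fin N)) : ℕ :=
  (Finset.univ.filter fun p : Fin N × Fin N => p.2 < p.1 ∧ p.2 < z p.1 ∧ p.1 < z p.2).card

/-- The Pfaffian of an `N × N` matrix:
`pf(A) = ∑_{z fpf involution of [N]} (-1)^{ℓ_fpf(z)} ∏_{z(i) < i} A_{z(i), i}`.
(The sum is empty, hence `0`, when `N` is odd.) -/
noncomputable def Pfaffian {R : Type*} [CommRing R] {N : ℕ} (A : Matrix (Fin N) (Fin N) R) : R :=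
  ∑ z ∈ Finset.univ.filter (fun z : Equiv.Perm (Fin N) => (∀ i, z i ≠ i) ∧ ∀ i, z (z i) = i),
    (-1 : R) ^ ellFpfFin z * ∏ i ∈ Finset.univ.filter (fun i : Fin N => z i < i), A (z i) i

/-- Index set for the variables `u_{ij}`, `n ≥ i > j ≥ 1`, of the coordinate ring
`R_n = K[Mat^ss_n]`; the variable `⟨(a, b), _⟩` is `u_{a+1, b+1}`. -/
abbrev SSVar (n : ℕ) : Type := {p : Fin n × Fin n // p.2 < p.1}

/-- The generic skew-symmetric matrix `U^ss` over `R_n`. -/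
noncomputable def Uss (K : Type*) [CommRing K] (n : ℕ) :
    Matrix (Fin n) (Fin n) (MvPolynomial (SSVar n) K) :=
  Matrix.of fun i j =>
    if h : j < i then MvPolynomial.X ⟨(i, j), h⟩
    else if h' : i < j then -MvPolynomial.X ⟨(j, i), h'⟩
    else 0

/-- The ideal of polynomials vanishing on a set `X`, where a point `A` is evaluated
via `ev A : σ → K`. -/
noncomputable def vanishingIdeal {K : Type*} [CommRing K] {σ M : Type*}
    (X : Set M) (ev : M → σ → K) : Ideal (MvPolynomial σ K) where
  carrier := {f | ∀ A ∈ X, MvPolynomial.eval (ev A) f = 0}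
  zero_mem' := by simp
  add_mem' := by
    intro f g hf hg
    simp only [Set.mem_setOf_eq] at *
    intro A hA
    rw [map_add, hf A hA, hg A hA, add_zero]
  smul_mem' := by
    intro c f hf
    simp only [Set.mem_setOf_eq] at *
    intro A hA
    rw [smul_eq_mul, map_mul, hf A hA, mul_zero]

/-- `I(X^ss_z) ⊆ R_n`, where `u_{ij}` is evaluated at `A` as `A_{ij}`. -/
noncomputable def IXss (K : Type*) [Field K] (n : ℕ) (z : Equiv.Perm ℕ) :
    Ideal (MvPolynomial (SSVar n) K) :=
  vanishingIdeal (Xss K n z) fun A v => A v.1.1 v.1.2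

/-- `pf(U^ss_{RR})` for a finite row/column set `R` (listed in increasing order). -/
noncomputable def pfUss (K : Type*) [CommRing K] {n : ℕ} (R : Finset (Fin n)) :
    MvPolynomial (SSVar n) K :=
  Pfaffian ((Uss K n).submatrix (fun s => R.orderEmbOfFin rfl s) fun t => R.orderEmbOfFin rfl t)

/-- The ideal `I^ss_z`, generated by the Pfaffians `pf(U^ss_{RR})` over all nonempty
even-size `R ⊆ [n]` such that `R ⊆ [i]` and `|R ∩ [j]| > r_z(i,j)` for some `i ≥ j`. -/
noncomputable def IssIdeal (K : Type*) [Field K] (n : ℕ) (z : Equiv.Perm ℕ) :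
    Ideal (MvPolynomial (SSVar n) K) :=
  Ideal.span {f : MvPolynomial (SSVar n) K | ∃ R : Finset (Fin n),
    R.Nonempty ∧ Even R.card ∧
    (∃ i j : ℕ, 1 ≤ j ∧ j ≤ i ∧ i ≤ n ∧ (∀ a ∈ R, (a : ℕ) + 1 ≤ i) ∧
      rnk z i j < (R.filter fun a : Fin n => (a : ℕ) + 1 ≤ j).card) ∧
    f = pfUss K R}

/-- The square-free monomial `u^ss_{AB}`: zero if `A ⊙ B` meets the diagonal, and otherwise
the product of the variables `u_{ij}` over the pairs `i > j` with `(i,j)` or `(j,i)` in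
`A ⊙ B = {(a_0, b_r), (a_1, b_{r-1}), ..., (a_r, b_0)}`. -/
noncomputable def ussMon (K : Type*) [CommRing K] {n : ℕ} (A B : Finset (Fin n)) :
    MvPolynomial (SSVar n) K :=
  if h : A.card = B.card then
    if ∃ t : Fin A.card, (A.orderEmbOfFin rfl t : Fin n) = B.orderEmbOfFin h.symm t.rev then 0
    else
      ∏ v ∈ Finset.univ.filter (fun v : SSVar n => ∃ t : Fin A.card,
          (A.orderEmbOfFin rfl t = v.1.1 ∧ B.orderEmbOfFin h.symm t.rev = v.1.2) ∨
          (A.orderEmbOfFin rfl t = v.1.2 ∧ B.orderEmbOfFin h.symm t.rev = v.1.1)),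
        MvPolynomial.X v
  else 0

/-- The monomial ideal `J^ss_r` of a symmetric rank table `r`, generated by the monomials
`u^ss_{AB}` with `A ⊆ [i]`, `B ⊆ [j]`, `|A| = |B| = r(i,j) + 1` for some `n ≥ i ≥ j ≥ 1`. -/
noncomputable def JssIdealOfTable (K : Type*) [CommRing K] (n : ℕ) (r : ℕ → ℕ → ℕ) :
    Ideal (MvPolynomial (SSVar n) K) :=
  Ideal.span {g : MvPolynomial (SSVar n) K | ∃ (i j : ℕ) (A B : Finset (Fin n)),
    1 ≤ j ∧ j ≤ i ∧ i ≤ n ∧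
    (∀ a ∈ A, (a : ℕ) + 1 ≤ i) ∧ (∀ b ∈ B, (b : ℕ) + 1 ≤ j) ∧
    A.card = r i j + 1 ∧ B.card = r i j + 1 ∧ g = ussMon K A B}

/-- `J^ss_z = J^ss_{r_z}`. -/
noncomputable def JssIdeal (K : Type*) [CommRing K] (n : ℕ) (z : Equiv.Perm ℕ) :
    Ideal (MvPolynomial (SSVar n) K) :=
  JssIdealOfTable K n (rnk z)

/-- Total degree of a monomial (exponent vector). -/
def totalDeg {σ : Type*} (m : σ →₀ ℕ) : ℕ := m.sum fun _ e => e

/-- The lexicographic order on the variables `u_{ij}` by the pair `(i, j)`. -/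
def varLT {n : ℕ} (v w : SSVar n) : Prop :=
  v.1.1 < w.1.1 ∨ (v.1.1 = w.1.1 ∧ v.1.2 < w.1.2)

/-- The (graded) reverse lexicographic term order on monomials of `R_n`:
`m₁ < m₂` iff `deg m₁ < deg m₂`, or the degrees agree and the lexicographically largest
variable with different exponents has strictly larger exponent in `m₁`. -/
def revlexLT {n : ℕ} (m₁ m₂ : SSVar n →₀ ℕ) : Prop :=
  totalDeg m₁ < totalDeg m₂ ∨
    (totalDeg m₁ = totalDeg m₂ ∧ ∃ v, m₂ v < m₁ v ∧ ∀ w, varLT v w → m₁ w = m₂ w)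

/-- The initial ideal of `I` with respect to a strict term order `lt`: the ideal
generated by the leading monomials `init(f)` of the nonzero `f ∈ I`. -/
noncomputable def initIdeal {K : Type*} [CommRing K] {σ : Type*}
    (lt : (σ →₀ ℕ) → (σ →₀ ℕ) → Prop) (I : Ideal (MvPolynomial σ K)) :
    Ideal (MvPolynomial σ K) :=
  Ideal.span {g : MvPolynomial σ K | ∃ f ∈ I, f ≠ 0 ∧ ∃ m : σ →₀ ℕ, m ∈ f.support ∧
    (∀ m' ∈ f.support, m' ≠ m → lt m' m) ∧ g = MvPolynomial.monomial m (1 : K)}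

/-- A term order on the monomials of a polynomial ring: a linear order in which `1` is
the unique minimum and multiplication by a fixed monomial preserves order. -/
structure TermOrder (σ : Type*) where
  le : (σ →₀ ℕ) → (σ →₀ ℕ) → Prop
  trans : ∀ a b c, le a b → le b c → le a c
  antisymm : ∀ a b, le a b → le b a → a = b
  total : ∀ a b, le a b ∨ le b a
  zero_le : ∀ a, le 0 a
  add_le_add_right : ∀ a b c, le a b → le (a + c) (b + c)

/-- The initial ideal of `I` with respect to a term order `τ`. -/
noncomputable def initIdealLe {K : Type*} [CommRing K] {σ : Type*}
    (τ : TermOrder σ) (I : Ideal (MvPolynomial σ K)) : Ideal (MvPolynomial σ K) :=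
  Ideal.span {g : MvPolynomial σ K | ∃ f ∈ I, f ≠ 0 ∧ ∃ m : σ →₀ ℕ, m ∈ f.support ∧
    (∀ m' ∈ f.support, τ.le m' m) ∧ g = MvPolynomial.monomial m (1 : K)}

/-- An ideal is homogeneous (w.r.t. total degree) iff it contains all homogeneous
components of its elements. -/
def IsHomogIdeal {K : Type*} [CommSemiring K] {σ : Type*}
    (I : Ideal (MvPolynomial σ K)) : Prop :=
  ∀ f ∈ I, ∀ d : ℕ, MvPolynomial.homogeneousComponent d f ∈ I

/-- The reading order on boxes: rows top to bottom, each row right to left. -/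
def pdRel (p q : ℕ × ℕ) : Prop := p.1 < q.1 ∨ (p.1 = q.1 ∧ q.2 ≤ p.2)

instance : DecidableRel pdRel := fun p q => by unfold pdRel; infer_instance

instance : IsTrans (ℕ × ℕ) pdRel :=
  ⟨fun a b c hab hbc => by unfold pdRel at *; omega⟩

instance : IsAntisymm (ℕ × ℕ) pdRel :=
  ⟨fun a b hab hba => by
    unfold pdRel at hab hba
    exact Prod.ext_iff.mpr ⟨by omega, by omega⟩⟩

instance : IsTotal (ℕ × ℕ) pdRel :=
  ⟨fun a b => by unfold pdRel; omega⟩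

/-- The pipe dream reading word of a finite set `D` of boxes: the letters `i + j - 1`
over `(i, j) ∈ D`, in the order making `(i, -j)` increase lexicographically. -/
def pdWord (D : Finset (ℕ × ℕ)) : List ℕ :=
  (D.sort pdRel).map fun p => p.1 + p.2 - 1

/-- The product `s_{i_1} s_{i_2} ⋯ s_{i_l}` of simple transpositions. -/
def wordProd (l : List ℕ) : Equiv.Perm ℕ :=
  (l.map fun i => Equiv.swap i (i + 1)).prod

/-- `l` is a reduced word for `w`: a minimal-length word of positive letters whose
product of simple transpositions is `w`. -/
def IsReducedWordOf (w : Equiv.Perm ℕ) (l : List ℕ) : Prop :=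
  (∀ a ∈ l, 1 ≤ a) ∧ wordProd l = w ∧
    ∀ l' : List ℕ, (∀ a ∈ l', 1 ≤ a) → wordProd l' = w → l.length ≤ l'.length

/-- The set `RP(w)` of reduced pipe dreams for `w`. -/
def RP (w : Equiv.Perm ℕ) : Set (Finset (ℕ × ℕ)) :=
  {D | (∀ p ∈ D, 1 ≤ p.1 ∧ 1 ≤ p.2) ∧ IsReducedWordOf w (pdWord D)}

/-- `I^FPF_m`: involutions in `S_∞` that are fixed-point-free on `[m]` and fix
all `i > m`. -/
def IFPFm (m : ℕ) : Set (Equiv.Perm ℕ) :=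
  {y | y 0 = 0 ∧ y * y = 1 ∧ (∀ i, 1 ≤ i → i ≤ m → y i ≠ i) ∧ ∀ i, m < i → y i = i}

/-- `z = FPF_m(y)`: `z` agrees with `y` on `[m]` and swaps `m + 2k - 1, m + 2k`
for all `k ≥ 1`. -/
def IsFPFStdOf (m : ℕ) (y z : Equiv.Perm ℕ) : Prop :=
  (∀ i, i ≤ m → z i = y i) ∧
    ∀ k : ℕ, z (m + 2 * k + 1) = m + 2 * k + 2 ∧ z (m + 2 * k + 2) = m + 2 * k + 1

/-- The set `FP(z)` of fpf-involution pipe dreams for `z ∈ I^FPF_∞`. -/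
def FP (z : Equiv.Perm ℕ) : Set (Finset (ℕ × ℕ)) :=
  {E | ∃ (m : ℕ) (y : Equiv.Perm ℕ) (D : Finset (ℕ × ℕ)), Even m ∧ y ∈ IFPFm m ∧
    IsFPFStdOf m y z ∧ D ∈ RP y ∧ D.image Prod.swap = D ∧
    E = D.filter fun p => p.2 < p.1}

/-- The minor `det(U_{AB})` of the generic `m × n` matrix `U`, with rows `A` and
columns `B` listed in increasing order. -/
noncomputable def genMinor (K : Type*) [CommRing K] {m n : ℕ}
    (A : Finset (Fin m)) (B : Finset (Fin n)) (h : A.card = B.card) :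
    MvPolynomial (Fin m × Fin n) K :=
  (Matrix.of fun s t : Fin A.card =>
    (MvPolynomial.X (A.orderEmbOfFin rfl s, B.orderEmbOfFin h.symm t) :
      MvPolynomial (Fin m × Fin n) K)).det

/-- The antidiagonal monomial `u_{AB} = ∏_{(a,b) ∈ A ⊙ B} u_{ab}`. -/
noncomputable def genMon (K : Type*) [CommRing K] {m n : ℕ}
    (A : Finset (Fin m)) (B : Finset (Fin n)) (h : A.card = B.card) :
    MvPolynomial (Fin m × Fin n) K :=
  ∏ t : Fin A.card, MvPolynomial.X (A.orderEmbOfFin rfl t, B.orderEmbOfFin h.symm t.rev)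

/-- The exponent vector of the antidiagonal monomial `u_{AB}`. -/
noncomputable def antidiagExp {m n : ℕ} (A : Finset (Fin m)) (B : Finset (Fin n))
    (h : A.card = B.card) : (Fin m × Fin n) →₀ ℕ :=
  ∑ t : Fin A.card, Finsupp.single (A.orderEmbOfFin rfl t, B.orderEmbOfFin h.symm t.rev) 1

/-- The ideal `I_w`, generated by the minors `det(U_{AB})` with `A ⊆ [i]`, `B ⊆ [j]`,
`|A| = |B| = r_w(i,j) + 1` for some `(i,j) ∈ [m] × [n]`. -/
noncomputable def IwIdeal (K : Type*) [Field K] (m n : ℕ) (w : Equiv.Perm ℕ) :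
    Ideal (MvPolynomial (Fin m × Fin n) K) :=
  Ideal.span {g : MvPolynomial (Fin m × Fin n) K |
    ∃ (i j : ℕ) (A : Finset (Fin m)) (B : Finset (Fin n)) (h : A.card = B.card),
      1 ≤ i ∧ i ≤ m ∧ 1 ≤ j ∧ j ≤ n ∧ (∀ a ∈ A, (a : ℕ) + 1 ≤ i) ∧
      (∀ b ∈ B, (b : ℕ) + 1 ≤ j) ∧ A.card = rnk w i j + 1 ∧ g = genMinor K A B h}

/-- The monomial ideal `J_w`, generated by the monomials `u_{AB}` with `A ⊆ [i]`,
`B ⊆ [j]`, `|A| = |B| = r_w(i,j) + 1` for some `(i,j) ∈ [m] × [n]`. -/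
noncomputable def JwIdeal (K : Type*) [Field K] (m n : ℕ) (w : Equiv.Perm ℕ) :
    Ideal (MvPolynomial (Fin m × Fin n) K) :=
  Ideal.span {g : MvPolynomial (Fin m × Fin n) K |
    ∃ (i j : ℕ) (A : Finset (Fin m)) (B : Finset (Fin n)) (h : A.card = B.card),
      1 ≤ i ∧ i ≤ m ∧ 1 ≤ j ∧ j ≤ n ∧ (∀ a ∈ A, (a : ℕ) + 1 ≤ i) ∧
      (∀ b ∈ B, (b : ℕ) + 1 ≤ j) ∧ A.card = rnk w i j + 1 ∧ g = genMon K A B h}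

/-- The matrix Schubert variety
`X_w = {A ∈ Mat_{m×n} : rank A_{[i][j]} ≤ r_w(i,j) for all (i,j) ∈ [m] × [n]}`. -/
noncomputable def Xw (K : Type*) [Field K] (m n : ℕ) (w : Equiv.Perm ℕ) :
    Set (Matrix (Fin m) (Fin n) K) :=
  {A | ∀ (i j : ℕ) (hi : i ≤ m) (hj : j ≤ n), 1 ≤ i → 1 ≤ j →
    (A.submatrix (Fin.castLE hi) (Fin.castLE hj)).rank ≤ rnk w i j}

/-- `I(X_w)`: the ideal of polynomials vanishing on `X_w`. -/
noncomputable def IXw (K : Type*) [Field K] (m n : ℕ) (w : Equiv.Perm ℕ) :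
    Ideal (MvPolynomial (Fin m × Fin n) K) :=
  vanishingIdeal (Xw K m n w) fun A v => A v.1 v.2

/-- The variable `u_{pq}` (with `1 ≤ q < p ≤ n`) of `R_n`. -/
def ssvar {n : ℕ} (p q : ℕ) (hp : p ≤ n) (hq : 1 ≤ q) (hqp : q < p) : SSVar n :=
  ⟨(⟨p - 1, by omega⟩, ⟨q - 1, by omega⟩), Fin.mk_lt_mk.mpr (by omega)⟩

/-- Index set for the variables `u_{ij}`, `i > j ≥ 1`, over all positive integers. -/
abbrev PVar : Type := {p : ℕ × ℕ // 1 ≤ p.2 ∧ p.2 < p.1}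

/-- The generic skew-symmetric array `U^ss` over the positive integers:
`u_{xy}` if `x > y`, `-u_{yx}` if `x < y`, `0` if `x = y`. -/
noncomputable def UssP (K : Type*) [CommRing K] (x y : ℕ) : MvPolynomial PVar K :=
  if h : 1 ≤ y ∧ y < x then MvPolynomial.X ⟨(x, y), h⟩
  else if h' : 1 ≤ x ∧ x < y then -MvPolynomial.X ⟨(y, x), h'⟩
  else 0

/-- `pf(U^ss_{RR})` for a finite set `R` of positive integers. -/
noncomputable def pfUssP (K : Type*) [CommRing K] (R : Finset ℕ) : MvPolynomial PVar K :=
  Pfaffian (Matrix.of fun s t : Fin R.card =>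
    UssP K (R.orderEmbOfFin rfl s) (R.orderEmbOfFin rfl t))

/-- `g_{AB}`: the Pfaffian of the `(|B|+|A|) × (|B|+|A|)` skew-symmetric matrix whose
rows and columns are labeled by `B` (increasing) followed by `A` (increasing), with
entry `U^ss_{xy}` at a position labeled `(x, y)`, except that the entry is `0` when
both labels come from the `A`-block. -/
noncomputable def gAB (K : Type*) [CommRing K] (A B : Finset ℕ) : MvPolynomial PVar K :=
  Pfaffian ((Matrix.of fun p q : Fin B.card ⊕ Fin A.card =>
      match p, q with
      | Sum.inl s, Sum.inl t => UssP K (B.orderEmbOfFin rfl s) (B.orderEmbOfFin rfl t)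
      | Sum.inl s, Sum.inr t => UssP K (B.orderEmbOfFin rfl s) (A.orderEmbOfFin rfl t)
      | Sum.inr s, Sum.inl t => UssP K (A.orderEmbOfFin rfl s) (B.orderEmbOfFin rfl t)
      | Sum.inr _, Sum.inr _ => (0 : MvPolynomial PVar K)).submatrix
    finSumFinEquiv.symm finSumFinEquiv.symm)

/-- The exponent of the sign `⟨T, S⟩ = (-1)^{|S||T| + C(|S|,2) + ∑ of the (1-indexed)
positions in the increasing enumeration of `T` occupied by elements of `S`}`. -/
def setSgnExp (T S : Finset ℕ) : ℕ :=
  S.card * T.card + Nat.choose S.card 2 +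
    ∑ t : Fin T.card, if T.orderEmbOfFin rfl t ∈ S then (t : ℕ) + 1 else 0


theorem prod_fix : ∀ (k : ℕ) (a b : Fin k → ℕ) (x : ℕ), (∀ t, x ≠ a t) → (∀ t, x ≠ b t) →
    (List.ofFn fun t : Fin k => Equiv.swap (a t) (b t)).prod x = x := by
  intro k
  induction k with
  | zero => intro a b x _ _; simp
  | succ k ih =>
    intro a b x ha hb
    rw [List.ofFn_succ, List.prod_cons, Equiv.Perm.mul_apply,
      ih (fun t => a t.succ) (fun t => b t.succ) x (fun t => ha _) (fun t => hb _)]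
    exact Equiv.swap_apply_of_ne_of_ne (ha 0) (hb 0)

theorem prod_swap : ∀ (k : ℕ) (a b : Fin k → ℕ), Function.Injective a → Function.Injective b →
    (∀ i j, a i ≠ b j) → ∀ t,
    (List.ofFn fun t : Fin k => Equiv.swap (a t) (b t)).prod (a t) = b t ∧
    (List.ofFn fun t : Fin k => Equiv.swap (a t) (b t)).prod (b t) = a t := by
  intro k
  induction k with
  | zero => intro a b _ _ _ t; exact t.elim0
  | succ k ih =>
    intro a b ha hb hab t
    rw [List.ofFn_succ, List.prod_cons, Equiv.Perm.mul_apply, Equiv.Perm.mul_apply]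
    refine Fin.cases ?_ (fun t => ?_) t
    · rw [prod_fix k (fun t => a t.succ) (fun t => b t.succ) (a 0)
        (fun t h => (Fin.succ_ne_zero t) (ha h).symm) (fun t => hab _ _),
        prod_fix k (fun t => a t.succ) (fun t => b t.succ) (b 0)
        (fun t h => hab _ _ h.symm) (fun t h => (Fin.succ_ne_zero t) (hb h).symm)]
      simp
    · have h := ih (fun t => a t.succ) (fun t => b t.succ)
        (fun i j h => Fin.succ_injective _ (ha h)) (fun i j h => Fin.succ_injective _ (hb h))
        (fun i j => hab _ _) t
      rw [h.1, h.2]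
      constructor
      · exact Equiv.swap_apply_of_ne_of_ne (fun h => hab _ _ h.symm)
          (fun h => (Fin.succ_ne_zero t) (hb h))
      · exact Equiv.swap_apply_of_ne_of_ne (fun h => (Fin.succ_ne_zero t) (ha h)) (hab _ _)

theorem mem_fixed {n : ℕ} {z : Equiv.Perm ℕ} {x : ℕ} :
    x ∈ fixedPtsIn n z ↔ (1 ≤ x ∧ x ≤ n) ∧ z x = x := by
  simp [fixedPtsIn]

theorem e_mem (n : ℕ) (z : Equiv.Perm ℕ) (t : Fin (fixedPtsIn n z).card) :
    (1 ≤ (fixedPtsIn n z).orderEmbOfFin rfl t ∧ (fixedPtsIn n z).orderEmbOfFin rfl t ≤ n) ∧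
      z ((fixedPtsIn n z).orderEmbOfFin rfl t) = (fixedPtsIn n z).orderEmbOfFin rfl t :=
  mem_fixed.1 (Finset.orderEmbOfFin_mem _ _ _)

theorem e_surj {n : ℕ} {z : Equiv.Perm ℕ} {x : ℕ} (hx : x ∈ fixedPtsIn n z) :
    ∃ t, (fixedPtsIn n z).orderEmbOfFin rfl t = x := by
  have := Finset.range_orderEmbOfFin (fixedPtsIn n z) rfl
  have h : x ∈ Set.range ((fixedPtsIn n z).orderEmbOfFin rfl) := by rw [this]; exact hx
  exact h

theorem tail_lo {m x : ℕ} (h : x ≤ m) : tailSwap m x = x := by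
  change tailSwapFun m x = x
  simp [tailSwapFun, h]

theorem std_lo (n : ℕ) (z : Equiv.Perm ℕ) (x : ℕ) (hx : x ≤ n)
    (hf : x ∉ fixedPtsIn n z) : fpfStd n z x = z x := by
  unfold fpfStd
  rw [Equiv.Perm.mul_apply, Equiv.Perm.mul_apply, tail_lo (by omega), prod_fix]
  · intro t h
    exact hf (h ▸ Finset.orderEmbOfFin_mem _ _ _)
  · intro t h; omega

theorem std_sw (n : ℕ) (z : Equiv.Perm ℕ) (hz : z ∈ InvolIn n)
    (t : Fin (fixedPtsIn n z).card) :
    fpfStd n z ((fixedPtsIn n z).orderEmbOfFin rfl t) = n + t + 1 ∧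
    fpfStd n z (n + t + 1) = (fixedPtsIn n z).orderEmbOfFin rfl t := by
  have he := e_mem n z
  have := prod_swap _ (fun t => (fixedPtsIn n z).orderEmbOfFin rfl t)
    (fun t : Fin (fixedPtsIn n z).card => n + (t : ℕ) + 1)
    (fun i j h => ((fixedPtsIn n z).orderEmbOfFin rfl).injective h)
    (fun i j h => Fin.ext (by simp only at h; omega))
    (fun i j h => by have := he i; omega) t
  unfold fpfStd
  have ht := t.2
  have h1 := he t
  simp only [Equiv.Perm.mul_apply]
  rw [tail_lo (by omega), tail_lo (by omega), this.1, this.2]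
  exact ⟨hz.2.2 _ (by omega), h1.2⟩

theorem std_hi (n : ℕ) (z : Equiv.Perm ℕ) (hz : z ∈ InvolIn n) (x : ℕ)
    (hx : n + (fixedPtsIn n z).card < x) :
    fpfStd n z x = tailSwapFun (n + (fixedPtsIn n z).card) x := by
  have hc : n + (fixedPtsIn n z).card < tailSwapFun (n + (fixedPtsIn n z).card) x := by
    unfold tailSwapFun; split_ifs <;> omega
  unfold fpfStd
  rw [Equiv.Perm.mul_apply, Equiv.Perm.mul_apply]
  have hts : tailSwap (n + (fixedPtsIn n z).card) x =
    tailSwapFun (n + (fixedPtsIn n z).card) x := rfl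
  rw [hts, prod_fix]
  · exact hz.2.2 _ (by omega)
  · intro t h; have := e_mem n z t; omega
  · intro t h; have := t.2; omega

theorem nkeven (n : ℕ) (z : Equiv.Perm ℕ) (hz : z ∈ InvolIn n) :
    (n + (fixedPtsIn n z).card) % 2 = 0 := by
  have hzz : ∀ x, z (z x) = x := fun x => by
    rw [← Equiv.Perm.mul_apply, hz.2.1]; rfl
  have h1 : ((Finset.Icc 1 n).filter fun i => z i = i).card +
      ((Finset.Icc 1 n).filter fun i => ¬ z i = i).card = (Finset.Icc 1 n).card :=
    Finset.card_filter_add_card_filter_not _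
  have h2 : ∑ x ∈ (Finset.Icc 1 n).filter (fun i => ¬ z i = i), (1 : ZMod 2) = 0 := by
    refine Finset.sum_involution (fun x _ => z x) ?_ ?_ ?_ ?_
    · intros; decide
    · intro a ha _; exact (Finset.mem_filter.1 ha).2
    · intro a ha
      simp only [Finset.mem_filter, Finset.mem_Icc] at ha ⊢
      refine ⟨⟨?_, ?_⟩, fun h => ha.2 ?_⟩
      · rcases Nat.eq_zero_or_pos (z a) with h | h
        · have := hzz a; rw [h, hz.1] at this; omega
        · exact h
      · by_contra h
        have := hz.2.2 (z a) (by omega)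
        rw [hzz] at this; omega
      · exact z.injective h
    · intro a _; exact hzz a
  simp only [Finset.sum_const, nsmul_eq_mul, mul_one] at h2
  rw [ZMod.natCast_eq_zero_iff] at h2
  simp only [Nat.card_Icc] at h1
  unfold fixedPtsIn
  omega

/-- Case analysis for points relative to `n` and the fixed points of `z`. -/
theorem cases_pt (n : ℕ) (z : Equiv.Perm ℕ) (x : ℕ) :
    (x ≤ n ∧ x ∉ fixedPtsIn n z) ∨ (∃ t, (fixedPtsIn n z).orderEmbOfFin rfl t = x) ∨
    (∃ t : Fin (fixedPtsIn n z).card, n + t + 1 = x) ∨ n + (fixedPtsIn n z).card < x := by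
  by_cases h : x ≤ n
  · by_cases h' : x ∈ fixedPtsIn n z
    · exact Or.inr (Or.inl (e_surj h'))
    · exact Or.inl ⟨h, h'⟩
  · by_cases h' : n + (fixedPtsIn n z).card < x
    · exact Or.inr (Or.inr (Or.inr h'))
    · refine Or.inr (Or.inr (Or.inl ⟨⟨x - n - 1, by omega⟩, ?_⟩))
      simp only; omega

theorem invol_le {n : ℕ} {z : Equiv.Perm ℕ} (hz : z ∈ InvolIn n) {x : ℕ} (hx : x ≤ n) :
    z x ≤ n := by
  by_contra h
  have h1 := hz.2.2 (z x) (by omega)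
  have := z.injective h1
  omega

theorem std_mem (n : ℕ) (z : Equiv.Perm ℕ) (hz : z ∈ InvolIn n) : fpfStd n z ∈ IFPFInfty := by
  have hzz : ∀ x, z (z x) = x := fun x => by
    rw [← Equiv.Perm.mul_apply, hz.2.1]; rfl
  have hev := nkeven n z hz
  have h0 : (0 : ℕ) ∉ fixedPtsIn n z := by rw [mem_fixed]; omega
  refine ⟨?_, ?_, ?_, n + (fixedPtsIn n z).card + 1, ?_⟩
  · rw [std_lo n z 0 (by omega) h0, hz.1]
  · intro i hi
    rcases cases_pt n z i with ⟨h1, h2⟩ | ⟨t, rfl⟩ | ⟨t, rfl⟩ | h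
    · rw [std_lo n z i h1 h2]
      intro h; exact h2 (mem_fixed.2 ⟨⟨hi, h1⟩, h⟩)
    · rw [(std_sw n z hz t).1]; have := e_mem n z t; omega
    · rw [(std_sw n z hz t).2]; have := e_mem n z t; omega
    · rw [std_hi n z hz i h]; unfold tailSwapFun; split_ifs <;> omega
  · ext i
    rw [Equiv.Perm.mul_apply, Equiv.Perm.one_apply]
    rcases cases_pt n z i with ⟨h1, h2⟩ | ⟨t, rfl⟩ | ⟨t, rfl⟩ | h
    · rw [std_lo n z i h1 h2, std_lo n z (z i) (invol_le hz h1), hzz]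
      intro h
      have h3 := (mem_fixed.1 h)
      rw [hzz] at h3
      exact h2 (h3.2 ▸ h)
    · rw [(std_sw n z hz t).1, (std_sw n z hz t).2]
    · rw [(std_sw n z hz t).2, (std_sw n z hz t).1]
    · have hc : n + (fixedPtsIn n z).card < tailSwapFun (n + (fixedPtsIn n z).card) i := by
        unfold tailSwapFun; split_ifs <;> omega
      rw [std_hi n z hz i h, std_hi n z hz _ hc, tailSwapFun_involutive]
  · intro i hi
    rw [std_hi n z hz i (by omega)]
    unfold tailSwapFun oneFPF
    split_ifs <;> omega

theorem std_desc (n : ℕ) (z : Equiv.Perm ℕ) (hz : z ∈ InvolIn n) (i : ℕ)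
    (hi : visibleDescent (fpfStd n z) i) : i ≤ n := by
  by_contra hlt
  obtain ⟨_, h⟩ := hi
  rw [lt_min_iff] at h
  by_cases h1 : i + 1 ≤ n + (fixedPtsIn n z).card
  · have a := (std_sw n z hz ⟨i - n - 1, by omega⟩).2
    have b := (std_sw n z hz ⟨i - n, by omega⟩).2
    simp only at a b
    rw [show n + (i - n - 1) + 1 = i by omega] at a
    rw [show n + (i - n) + 1 = i + 1 by omega] at b
    rw [a, b] at h
    have := ((fixedPtsIn n z).orderEmbOfFin rfl).lt_iff_lt.1 h.2
    rw [Fin.lt_def] at this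
    simp only at this
    omega
  · rw [std_hi n z hz (i + 1) (by omega)] at h
    have := h.1
    unfold tailSwapFun at this
    split_ifs at this <;> omega

theorem std_rec (n : ℕ) (z : Equiv.Perm ℕ) (hz : z ∈ InvolIn n) (x : ℕ) (hx : x ≤ n) :
    z x = if fpfStd n z x ≤ n then fpfStd n z x else x := by
  by_cases h : x ∈ fixedPtsIn n z
  · obtain ⟨t, rfl⟩ := e_surj h
    rw [(std_sw n z hz t).1, if_neg (by omega)]
    exact (e_mem n z t).2
  · rw [std_lo n z x hx h, if_pos (invol_le hz hx)]

theorem std_inj (n : ℕ) : Set.InjOn (fpfStd n) (InvolIn n) := by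
  intro z hz w hw h
  ext x
  by_cases hx : x ≤ n
  · rw [std_rec n z hz x hx, std_rec n w hw x hx, h]
  · rw [hz.2.2 x (by omega), hw.2.2 x (by omega)]

theorem down_one {n : ℕ} {y : Equiv.Perm ℕ} (hd : ∀ i : ℕ, visibleDescent y i → i ≤ n)
    {i : ℕ} (hi : n < i) (h : y (i + 1) < i) : y i < y (i + 1) := by
  by_contra h1
  have hne : y i ≠ y (i + 1) := fun h => by have := y.injective h; omega
  have := hd i ⟨by omega, lt_min h (by omega)⟩
  omega

theorem down_all {n : ℕ} {y : Equiv.Perm ℕ} (hd : ∀ i : ℕ, visibleDescent y i → i ≤ n) (s : ℕ) :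
    ∀ j, n < j → y (j + s + 1) < j + s → y j < y (j + s + 1) ∧ y j < j := by
  induction s with
  | zero =>
    intro j hj h
    have := down_one hd hj h
    simp only [Nat.add_zero] at *
    omega
  | succ s ih =>
    intro j hj h
    have h1 := down_one (i := j + (s + 1)) hd (by omega) h
    have h2 := ih j hj (by rw [show j + s + 1 = j + (s + 1) by omega]; omega)
    rw [show j + s + 1 = j + (s + 1) by omega] at h2
    omega

theorem std_surj (n : ℕ) (y : Equiv.Perm ℕ) (hy : y ∈ IFPFInfty)
    (hd : ∀ i : ℕ, visibleDescent y i → i ≤ n) : ∃ z ∈ InvolIn n, fpfStd n z = y := by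
  obtain ⟨h0, hf, hinv, _⟩ := hy
  have hyy : ∀ x, y (y x) = x := fun x => by
    rw [← Equiv.Perm.mul_apply, hinv]; rfl
  have hmono : ∀ i j, n < i → i < j → y j < j - 1 → y i < y j ∧ y i < i := by
    intro i j hi hij h
    have := down_all hd (j - i - 1) i hi
    rw [show i + (j - i - 1) + 1 = j by omega] at this
    exact this (by omega)
  have hlow : ∀ j, n < j → y j < j → y j = j - 1 ∨ y j ≤ n := by
    intro j hj h
    by_contra hc
    push Not at hc
    have := hmono (y j) j hc.2 h (by omega)
    rw [hyy] at this
    omega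
  have hA : ∀ i j, n < i → i < j → y j ≤ n → y i < y j := by
    intro i j hi hij h
    exact (hmono i j hi hij (by omega)).1
  let f : ℕ → ℕ := fun i => if i ≤ n ∧ y i ≤ n then y i else i
  have hfi : Function.Involutive f := by
    intro i
    by_cases h : i ≤ n ∧ y i ≤ n
    · have e : f i = y i := if_pos h
      rw [e]
      have : f (y i) = y (y i) := if_pos ⟨h.2, by rw [hyy]; exact h.1⟩
      rw [this, hyy]
    · have e : f i = i := if_neg h
      rw [e, e]
  let z : Equiv.Perm ℕ := hfi.toPerm
  have hzf : ∀ i, z i = if i ≤ n ∧ y i ≤ n then y i else i := fun i => rfl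
  have hz : z ∈ InvolIn n := by
    refine ⟨?_, ?_, ?_⟩
    · rw [hzf, h0]; simp
    · ext i; exact hfi i
    · intro i hi; rw [hzf, if_neg (by omega)]
  have hfix : ∀ x, x ∈ fixedPtsIn n z ↔ x ≤ n ∧ n < y x := by
    intro x
    rw [mem_fixed, hzf]
    constructor
    · rintro ⟨⟨h1, h2⟩, h3⟩
      refine ⟨h2, ?_⟩
      by_contra h
      rw [if_pos (by omega)] at h3
      exact hf x h1 h3
    · rintro ⟨h1, h2⟩
      refine ⟨⟨?_, h1⟩, if_neg (by omega)⟩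
      rcases Nat.eq_zero_or_pos x with h | h
      · rw [h, h0] at h2; omega
      · exact h
  set k := (fixedPtsIn n z).card with hk
  have hAeq : (fixedPtsIn n z).image y = Finset.Ioc n (n + k) := by
    have hmem : ∀ j, j ∈ (fixedPtsIn n z).image y ↔ n < j ∧ y j ≤ n := by
      intro j
      rw [Finset.mem_image]
      constructor
      · rintro ⟨x, hx, rfl⟩
        rw [hyy]
        exact ((hfix x).1 hx).symm
      · rintro ⟨h1, h2⟩
        exact ⟨y j, (hfix _).2 ⟨h2, by rw [hyy]; exact h1⟩, hyy j⟩
    have hcard : ((fixedPtsIn n z).image y).card = k :=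
      Finset.card_image_of_injective _ y.injective
    apply Finset.eq_of_subset_of_card_le
    · intro j hj
      have hj' := (hmem j).1 hj
      have hs : Finset.Ioc n j ⊆ (fixedPtsIn n z).image y := by
        intro i hi
        rw [Finset.mem_Ioc] at hi
        rw [hmem]
        refine ⟨hi.1, ?_⟩
        rcases Nat.lt_or_ge i j with h | h
        · have := hA i j hi.1 h hj'.2; omega
        · have : i = j := by omega
          rw [this]; exact hj'.2
      have := Finset.card_le_card hs
      rw [hcard, Nat.card_Ioc] at this
      rw [Finset.mem_Ioc]; omega
    · rw [hcard, Nat.card_Ioc]; omega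
  have hAk : ∀ j, n < j → (y j ≤ n ↔ j ≤ n + k) := by
    intro j hj
    have h1 : j ∈ (fixedPtsIn n z).image y ↔ j ∈ Finset.Ioc n (n + k) := by rw [hAeq]
    rw [Finset.mem_Ioc, Finset.mem_image] at h1
    constructor
    · intro h
      exact (h1.1 ⟨y j, (hfix _).2 ⟨h, by rw [hyy]; exact hj⟩, hyy j⟩).2
    · intro h
      obtain ⟨x, hx, rfl⟩ := h1.2 ⟨hj, h⟩
      rw [hyy]; exact ((hfix x).1 hx).1
  have he : (fun t : Fin k => y (n + t + 1)) = (fixedPtsIn n z).orderEmbOfFin rfl := by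
    apply Finset.orderEmbOfFin_unique
    · intro t
      rw [hfix, hyy]
      exact ⟨(hAk _ (by omega)).2 (by omega), by omega⟩
    · intro s t hst
      rw [Fin.lt_def] at hst
      exact hA _ _ (by omega) (by omega) ((hAk _ (by omega)).2 (by omega))
  have he' : ∀ t : Fin k, (fixedPtsIn n z).orderEmbOfFin rfl t = y (n + t + 1) :=
    fun t => (congrFun he t).symm
  -- the tail
  have hpm : ∀ j, n + k < j → n + k < y j ∧ (y j < j → y j = j - 1) ∧ (j < y j → y j = j + 1) := by
    intro j hj
    have h1 : n < y j := by
      by_contra h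
      have := (hAk j (by omega)).1 (by omega)
      omega
    have h2 : n + k < y j := by
      by_contra h
      have := (hAk (y j) h1).2 (by omega)
      rw [hyy] at this; omega
    refine ⟨h2, fun h => ?_, fun h => ?_⟩
    · have := hlow j (by omega) h; omega
    · have := hlow (y j) h1 (by rw [hyy]; exact h)
      rw [hyy] at this; omega
  have htail : ∀ s, y (n + k + 2 * s + 1) = n + k + 2 * s + 2 ∧
      y (n + k + 2 * s + 2) = n + k + 2 * s + 1 := by
    intro s
    induction s with
    | zero =>
      have h := hpm (n + k + 2 * 0 + 1) (by omega)
      have hne := hf (n + k + 2 * 0 + 1) (by omega)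
      have h1 : y (n + k + 2 * 0 + 1) = n + k + 2 * 0 + 2 := by omega
      refine ⟨h1, ?_⟩
      rw [← h1, hyy]
    | succ s ih =>
      have h := hpm (n + k + 2 * (s + 1) + 1) (by omega)
      have hne := hf (n + k + 2 * (s + 1) + 1) (by omega)
      have hne2 : y (n + k + 2 * (s + 1) + 1) ≠ n + k + 2 * s + 2 := by
        intro h
        rw [← ih.1] at h
        have := y.injective h
        omega
      have h1 : y (n + k + 2 * (s + 1) + 1) = n + k + 2 * (s + 1) + 2 := by omega
      refine ⟨h1, ?_⟩
      rw [← h1, hyy]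
  refine ⟨z, hz, ?_⟩
  ext x
  rcases cases_pt n z x with ⟨h1, h2⟩ | ⟨t, rfl⟩ | ⟨t, rfl⟩ | h
  · rw [std_lo n z x h1 h2, hzf]
    rw [hfix] at h2
    rw [if_pos (by omega)]
  · rw [(std_sw n z hz t).1, he', hyy]
  · rw [(std_sw n z hz t).2, he']
  · rw [std_hi n z hz x h]
    unfold tailSwapFun
    rw [← hk] at h ⊢
    rw [if_neg (by omega)]
    split_ifs with h1
    · have := (htail ((x - (n + k)) / 2)).1
      rw [show n + k + 2 * ((x - (n + k)) / 2) + 1 = x by omega] at this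
      omega
    · have := (htail ((x - (n + k)) / 2 - 1)).2
      rw [show n + k + 2 * ((x - (n + k)) / 2 - 1) + 2 = x by omega] at this
      omega

/-- For `n ≥ 1`, the fixed-point-free standardization `FPF_n` sends every
involution in `I_n` into `I^FPF_∞`, and it is a bijection from `I_n` onto the set of
elements of `I^FPF_∞` with no visible descent greater than `n`. -/
theorem statement1 (n : ℕ) (hn : 1 ≤ n) :
    (∀ z ∈ InvolIn n, fpfStd n z ∈ IFPFInfty) ∧
      Set.BijOn (fpfStd n) (InvolIn n)
        {z | z ∈ IFPFInfty ∧ ∀ i : ℕ, visibleDescent z i → i ≤ n} := by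
  refine ⟨std_mem n, fun z hz => ⟨std_mem n z hz, std_desc n z hz⟩, std_inj n, ?_⟩
  rintro y ⟨hy, hd⟩
  exact std_surj n y hy hd

end Paper
end

section
/- Let n >= 1 and suppose y, z in FPF_n(I_n) satisfy r_y(i,j) <= r_z(i,j) for all i,j in [n]. Then r_y(i,j) <= r_z(i,j) for all i,j in [2n]. -/
namespace Paper

theorem aux_row (w : Equiv.Perm ℕ) (h0 : w 0 = 0) (i j : ℕ) :
    rnk w (i + 1) j = rnk w i j + if w (i + 1) ≤ j then 1 else 0 := by
  have hpos : 1 ≤ w (i + 1) := by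
    rcases Nat.eq_zero_or_pos (w (i + 1)) with h | h
    · have := w.injective (h.trans h0.symm)
      omega
    · exact h
  unfold rnk
  rw [← Finset.insert_Icc_right_eq_Icc_add_one (by omega : 1 ≤ i + 1), Finset.filter_insert]
  split_ifs with h1 h2 h2
  · rw [Finset.card_insert_of_notMem (by simp)]
  · simp at h1; omega
  · simp at h1; omega
  · rfl

theorem aux_symm (w : Equiv.Perm ℕ) (hw : w * w = 1) (i j : ℕ) :
    rnk w i j = rnk w j i := by
  have hh : ∀ a, w (w a) = a := fun a => by
    have := congrArg (fun f : Equiv.Perm ℕ => f a) hw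
    simpa using this
  unfold rnk
  apply Finset.card_bij' (fun a _ => w a) (fun a _ => w a)
  · intro a ha; simp only [Finset.mem_filter, hh] at ha ⊢; exact ⟨ha.2, ha.1⟩
  · intro a ha; simp only [Finset.mem_filter, hh] at ha ⊢; exact ⟨ha.2, ha.1⟩
  · intro a _; exact hh a
  · intro a _; exact hh a

theorem aux_col (w : Equiv.Perm ℕ) (h0 : w 0 = 0) (hw : w * w = 1) (i j : ℕ) :
    rnk w i (j + 1) = rnk w i j + if w (j + 1) ≤ i then 1 else 0 := by
  rw [aux_symm w hw i (j + 1), aux_row w h0, aux_symm w hw j i]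

theorem aux_diag (w : Equiv.Perm ℕ) (h0 : w 0 = 0) (hw : w * w = 1)
    (hf : ∀ i, 1 ≤ i → w i ≠ i) (i : ℕ) :
    rnk w (i + 1) (i + 1) = rnk w i i + if w (i + 1) ≤ i then 2 else 0 := by
  rw [aux_row w h0, aux_col w h0 hw]
  have := hf (i + 1) (by omega)
  split_ifs <;> omega

theorem aux_even (w : Equiv.Perm ℕ) (h0 : w 0 = 0) (hw : w * w = 1)
    (hf : ∀ i, 1 ≤ i → w i ≠ i) (i : ℕ) : rnk w i i % 2 = 0 := by
  induction i with
  | zero => simp [rnk]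
  | succ i ih =>
    rw [aux_diag w h0 hw hf]
    split_ifs <;> omega

theorem aux_le (w : Equiv.Perm ℕ) (i j : ℕ) : rnk w i j ≤ i := by
  unfold rnk
  exact (Finset.card_filter_le _ _).trans (by simp)

theorem aux_step (n : ℕ) (z : Equiv.Perm ℕ) (hz : z ∈ FPFIn n) (i j : ℕ)
    (hij : i ≤ j) (hj : n ≤ j) (hlt : rnk z i j < i) :
    z (j + 1) ≤ i := by
  obtain ⟨⟨h0, hf, hw, -⟩, hD⟩ := hz
  have hh : ∀ a, z (z a) = a := fun a => by
    have := congrArg (fun f : Equiv.Perm ℕ => f a) hw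
    simpa using this
  by_contra hcon
  have : ∃ a ∈ Finset.Icc 1 i, ¬ (z a ∈ Finset.Icc 1 j) := by
    by_contra hall
    push Not at hall
    have : rnk z i j = i := by
      unfold rnk
      rw [Finset.filter_true_of_mem hall]
      simp
    omega
  obtain ⟨a, ha, hza⟩ := this
  simp only [Finset.mem_Icc] at ha hza
  have hpos : z a ≠ 0 := fun h => by
    have := z.injective (h.trans h0.symm)
    omega
  have hne : z a ≠ j + 1 := fun h => by
    have := hh a
    rw [h] at this
    omega
  have hm : (j + 1, a) ∈ Dss z := by
    refine ⟨?_, ?_, ?_, ?_⟩ <;> simp only <;> omega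
  have := (hD hm).1
  simp only [Set.mem_Icc] at this
  omega

/-- If `y, z ∈ FPF_n(I_n)` satisfy `r_y(i,j) ≤ r_z(i,j)` for all
`i, j ∈ [n]`, then `r_y(i,j) ≤ r_z(i,j)` for all `i, j ∈ [2n]`. -/
theorem statement2 (n : ℕ) (hn : 1 ≤ n) (y z : Equiv.Perm ℕ)
    (hy : y ∈ FPFIn n) (hz : z ∈ FPFIn n)
    (h : ∀ i j : ℕ, 1 ≤ i → i ≤ n → 1 ≤ j → j ≤ n → rnk y i j ≤ rnk z i j) :
    ∀ i j : ℕ, 1 ≤ i → i ≤ 2 * n → 1 ≤ j → j ≤ 2 * n → rnk y i j ≤ rnk z i j := by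
  obtain ⟨⟨y0, yf, yw, -⟩, -⟩ := hy
  obtain ⟨⟨z0, zf, zw, -⟩, -⟩ := id hz
  have hdiag : ∀ i, n ≤ i → rnk y i i ≤ rnk z i i := by
    have low : ∀ i, n ≤ i →
        rnk y i i ≤ rnk y n n + 2 * (i - n) ∧
          (rnk z n n + 2 * (i - n) ≤ rnk z i i ∨ i ≤ rnk z i i + 1) := by
      intro i hi
      induction i, hi using Nat.le_induction with
      | base => constructor <;> omega
      | succ i hi ih =>
        rw [aux_diag y y0 yw yf, aux_diag z z0 zw zf]
        refine ⟨by split_ifs <;> omega, ?_⟩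
        have h1 := aux_step n z hz i i le_rfl hi
        have h2 := aux_le z i i
        split_ifs <;> omega
    intro i hi
    have h1 := low i hi
    have h2 := h n n hn le_rfl hn le_rfl
    have h3 := aux_even y y0 yw yf i
    have h4 := aux_even z z0 zw zf i
    have h5 := aux_le y i i
    omega
  have key : ∀ i, 1 ≤ i → ∀ j, max i n ≤ j → rnk y i j ≤ rnk z i j := by
    intro i hi j hj
    induction j, hj using Nat.le_induction with
    | base =>
      rcases le_total i n with hin | hin
      · rw [max_eq_right hin]; exact h i n hi hin hn le_rfl
      · rw [max_eq_left hin]; exact hdiag i hin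
    | succ j hj ih =>
      have h1 := aux_step n z hz i j (by omega) (by omega)
      have h2 := aux_le y i (j + 1)
      have h3 := aux_col y y0 yw i j
      have h4 := aux_col z z0 zw i j
      split_ifs at h3 h4 <;> omega
  intro i j hi _ hj _
  by_cases hin : i ≤ n ∧ j ≤ n
  · exact h i j hi hin.1 hj hin.2
  · rcases le_total i j with hij | hij
    · exact key i hi j (by omega)
    · rw [aux_symm y yw, aux_symm z zw]
      exact key j hj i (by omega)

end Paper
end

section
/- Let K be an algebraically closed field, let n >= 1, and let y, z in FPF_n(I_n). The following are equivalent: (a) y >= z in the Bruhat order on I^FPF_infty; (b) r_y(i,j) <= r_z(i,j) for all (i,j) in [n] x [n]; (c) X^ss_y is contained in X^ss_z. -/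
namespace Paper

structure Good (N : ℕ) (z : Equiv.Perm ℕ) : Prop where
  even : Even N
  zero : z 0 = 0
  fpf : ∀ i, 1 ≤ i → z i ≠ i
  inv : ∀ i, z (z i) = i
  tail : ∀ i, N < i → z i = oneFPF i

theorem Good.mem {N : ℕ} {z : Equiv.Perm ℕ} (h : Good N z) (i : ℕ) :
    z i ∈ Finset.Icc 1 N ↔ i ∈ Finset.Icc 1 N := by
  have key : ∀ i, i ∉ Finset.Icc 1 N → z i ∉ Finset.Icc 1 N := by
    intro i hi
    simp only [Finset.mem_Icc] at hi ⊢
    by_cases h0 : i = 0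
    · subst h0; rw [h.zero]; omega
    · have := h.tail i (by omega)
      obtain ⟨m, hm⟩ := h.even
      rw [this]; unfold oneFPF; split_ifs <;> omega
  constructor
  · intro hi; by_contra hc; exact key i hc hi
  · intro hi; by_contra hc; have := key _ hc; rw [h.inv] at this; exact this hi

theorem Good.mono {N M : ℕ} {z : Equiv.Perm ℕ} (h : Good N z) (hM : Even M) (hNM : N ≤ M) :
    Good M z := ⟨hM, h.zero, h.fpf, h.inv, fun i hi => h.tail i (by omega)⟩

theorem good_of {z : Equiv.Perm ℕ} (h : z ∈ IFPFInfty) : ∃ N, Good N z := by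
  obtain ⟨h0, h1, h2, N, hN⟩ := h
  refine ⟨2 * N, ⟨even_two_mul N, h0, h1, ?_, fun i hi => hN i (by omega)⟩⟩
  intro i
  have := congrArg (fun f : Equiv.Perm ℕ => f i) h2
  simpa using this

theorem Good.pos {N : ℕ} {z : Equiv.Perm ℕ} (h : Good N z) {i : ℕ} (hi : 1 ≤ i) : 1 ≤ z i := by
  by_contra hc
  have h1 : z i = 0 := by omega
  have := h.inv i
  rw [h1, h.zero] at this; omega

theorem Good.conj {N : ℕ} {z : Equiv.Perm ℕ} (h : Good N z) {i j : ℕ} (hi : i ∈ Finset.Icc 1 N)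
    (hj : j ∈ Finset.Icc 1 N) : Good N (Equiv.swap i j * z * Equiv.swap i j) := by
  have hii := Finset.mem_Icc.1 hi
  have hjj := Finset.mem_Icc.1 hj
  refine ⟨h.even, ?_, ?_, ?_, ?_⟩
  · simp only [Equiv.Perm.mul_apply]
    rw [Equiv.swap_apply_of_ne_of_ne (a := i) (b := j) (x := 0) (by omega) (by omega), h.zero,
      Equiv.swap_apply_of_ne_of_ne (by omega) (by omega)]
  · intro k hk hc
    simp only [Equiv.Perm.mul_apply] at hc
    have h2 := congrArg (Equiv.swap i j) hc
    rw [Equiv.swap_apply_self] at h2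
    refine h.fpf _ ?_ h2
    rw [Equiv.swap_apply_def]; split_ifs <;> omega
  · intro k
    simp [Equiv.Perm.mul_apply, h.inv]
  · intro k hk
    have hz : z k ∉ Finset.Icc 1 N := by rw [h.mem]; simp; omega
    simp only [Equiv.Perm.mul_apply]
    rw [Equiv.swap_apply_of_ne_of_ne (a := i) (b := j) (x := k) (by omega) (by omega),
      Equiv.swap_apply_of_ne_of_ne, h.tail k hk]
    · rintro rfl; exact hz hi
    · rintro rfl; exact hz hj

def FF (N : ℕ) (w : Equiv.Perm ℕ) : ℕ :=
  ∑ x ∈ Finset.Icc 1 N, ∑ y ∈ Finset.Icc 1 N, if x < y ∧ w y < w x then 1 else 0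

theorem sum_split (S T : Finset ℕ) (i j : ℕ) (hij : i ≠ j) (hi : i ∉ T) (hj : j ∉ T)
    (hS : S = insert i (insert j T)) (g : ℕ → ℕ → ℕ) :
    ∑ x ∈ S, ∑ y ∈ S, g x y = g i i + g i j + g j i + g j j +
      ∑ k ∈ T, (g i k + g k i + g j k + g k j) + ∑ x ∈ T, ∑ y ∈ T, g x y := by
  have h1 : i ∉ insert j T := by simp [hij, hi]
  subst hS
  simp only [Finset.sum_insert h1, Finset.sum_insert hj, Finset.sum_add_distrib]
  ring

theorem FF_swap {N i j : ℕ} (w : Equiv.Perm ℕ) (hi : 1 ≤ i) (hij : i < j) (hj : j ≤ N)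
    (hw : w i < w j) : FF N (w * Equiv.swap i j) = FF N w + 1 +
      2 * ∑ k ∈ ((Finset.Icc 1 N).erase i).erase j,
        if i < k ∧ k < j ∧ w i < w k ∧ w k < w j then 1 else 0 := by
  set T := ((Finset.Icc 1 N).erase i).erase j with hT
  have hS : Finset.Icc 1 N = insert i (insert j T) := by
    ext k; simp only [hT, Finset.mem_insert, Finset.mem_erase, Finset.mem_Icc]; omega
  have hiT : i ∉ T := by simp [hT]
  have hjT : j ∉ T := by simp [hT]
  unfold FF
  rw [sum_split _ T i j hij.ne hiT hjT hS, sum_split _ T i j hij.ne hiT hjT hS]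
  have e1 : ∀ k ∈ T, (w * Equiv.swap i j) k = w k := by
    intro k hk
    have : k ≠ i := by rintro rfl; exact hiT hk
    have : k ≠ j := by rintro rfl; exact hjT hk
    simp [Equiv.Perm.mul_apply, Equiv.swap_apply_of_ne_of_ne, *]
  have ei : (w * Equiv.swap i j) i = w j := by simp
  have ej : (w * Equiv.swap i j) j = w i := by simp
  have e2 : ∑ x ∈ T, ∑ y ∈ T, (if x < y ∧ (w * Equiv.swap i j) y < (w * Equiv.swap i j) x
      then 1 else 0) = ∑ x ∈ T, ∑ y ∈ T, (if x < y ∧ w y < w x then 1 else 0) := by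
    refine Finset.sum_congr rfl fun x hx => Finset.sum_congr rfl fun y hy => ?_
    rw [e1 x hx, e1 y hy]
  rw [e2, ei, ej, Finset.mul_sum]
  have e3 : ∑ k ∈ T, ((if i < k ∧ (w * Equiv.swap i j) k < w j then 1 else 0) +
      (if k < i ∧ w j < (w * Equiv.swap i j) k then 1 else 0) +
      (if j < k ∧ (w * Equiv.swap i j) k < w i then 1 else 0) +
      (if k < j ∧ w i < (w * Equiv.swap i j) k then 1 else 0)) =
      ∑ k ∈ T, ((if i < k ∧ w k < w i then 1 else 0) +
      (if k < i ∧ w i < w k then 1 else 0) +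
      (if j < k ∧ w k < w j then 1 else 0) +
      (if k < j ∧ w j < w k then 1 else 0)) +
      ∑ k ∈ T, 2 * (if i < k ∧ k < j ∧ w i < w k ∧ w k < w j then 1 else 0) := by
    rw [← Finset.sum_add_distrib]
    refine Finset.sum_congr rfl fun k hk => ?_
    rw [e1 k hk]
    have h1 : k ≠ i := by rintro rfl; exact hiT hk
    have h2 : k ≠ j := by rintro rfl; exact hjT hk
    have h3 : w k ≠ w i := fun h => h1 (w.injective h)
    have h4 : w k ≠ w j := fun h => h2 (w.injective h)
    split_ifs <;> omega
  rw [e3]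
  have g1 : ¬ (j < i) := by omega
  have g2 : ¬ (w j < w i) := by omega
  rw [if_neg (c := i < i ∧ _) (by omega), if_neg (c := j < j ∧ _) (by omega),
    if_pos (c := i < j ∧ w i < w j) ⟨hij, hw⟩, if_neg (c := j < i ∧ _) (by omega),
    if_neg (c := i < i ∧ _) (by omega), if_neg (c := j < j ∧ _) (by omega),
    if_neg (c := i < j ∧ w j < w i) (by omega), if_neg (c := j < i ∧ _) (by omega)]
  ring

theorem FF_inv {N : ℕ} (w : Equiv.Perm ℕ)
    (hw : ∀ x, w x ∈ Finset.Icc 1 N ↔ x ∈ Finset.Icc 1 N) : FF N w⁻¹ = FF N w := by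
  unfold FF
  have h1 : ∀ x, w.symm x ∈ Finset.Icc 1 N ↔ x ∈ Finset.Icc 1 N := by
    intro x; rw [← hw]; simp
  rw [Finset.sum_comm]
  refine Finset.sum_equiv w⁻¹ (fun x => by simpa using (h1 x).symm) fun x hx => ?_
  refine Finset.sum_equiv w⁻¹ (fun x => by simpa using (h1 x).symm) fun y hy => ?_
  have e1 : ∀ u, w (w⁻¹ u) = u := fun u => w.apply_symm_apply u
  rw [e1, e1]
  congr 1
  exact propext and_comm

theorem FF_conj {N i j : ℕ} {z : Equiv.Perm ℕ} (h : Good N z) (hi : 1 ≤ i) (hij : i < j)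
    (hj : j ≤ N) (hw : z i < z j) (hne : z i ≠ j) : ∃ e, 
    FF N (Equiv.swap i j * z * Equiv.swap i j) = FF N z + 2 + 2 * e ∧
    ((∀ k, i < k → k < j → z i < z k → z k < z j → False) → i < z i → (j < z i ∨ z j < j) → e = 0) := by
  have hne2 : z j ≠ i := fun hc => hne (by rw [← hc, h.inv])
  have hfi := h.fpf i hi
  have hfj := h.fpf j (by omega)
  have hz : z⁻¹ = z := by ext k; rw [Equiv.Perm.inv_eq_iff_eq, h.inv]
  have e1 := FF_swap (N := N) z hi hij hj hw
  have e2 := FF_inv (N := N) (z * Equiv.swap i j) (by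
    intro x
    rw [Equiv.Perm.mul_apply, h.mem, Equiv.swap_apply_def]
    simp only [Finset.mem_Icc]
    split_ifs <;> omega)
  rw [mul_inv_rev, hz, Equiv.swap_inv] at e2
  have ti : (Equiv.swap i j * z) i = z i := by
    rw [Equiv.Perm.mul_apply, Equiv.swap_apply_of_ne_of_ne hfi hne]
  have tj : (Equiv.swap i j * z) j = z j := by
    rw [Equiv.Perm.mul_apply, Equiv.swap_apply_of_ne_of_ne hne2 hfj]
  have e3 := FF_swap (N := N) (Equiv.swap i j * z) hi hij hj (by rw [ti, tj]; exact hw)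
  rw [e2, e1, ti, tj] at e3
  refine ⟨(∑ k ∈ ((Finset.Icc 1 N).erase i).erase j,
      if i < k ∧ k < j ∧ z i < z k ∧ z k < z j then 1 else 0) +
    ∑ k ∈ ((Finset.Icc 1 N).erase i).erase j,
      if i < k ∧ k < j ∧ z i < (Equiv.swap i j * z) k ∧ (Equiv.swap i j * z) k < z j
      then 1 else 0, by rw [e3]; ring, ?_⟩
  intro H1 H3 H2
  rw [Nat.add_eq_zero_iff]
  constructor
  · refine Finset.sum_eq_zero fun k _ => if_neg ?_
    rintro ⟨a1, a2, a3, a4⟩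
    exact H1 k a1 a2 a3 a4
  · refine Finset.sum_eq_zero fun k _ => if_neg ?_
    rintro ⟨a1, a2, a3, a4⟩
    rw [Equiv.Perm.mul_apply, Equiv.swap_apply_def] at a3 a4
    split_ifs at a3 a4 with b1 b2
    · have : k = z i := by rw [← b1, h.inv]
      omega
    · have : k = z j := by rw [← b2, h.inv]
      omega
    · exact H1 k a1 a2 a3 a4

theorem Good.Dss_sub {N : ℕ} {z : Equiv.Perm ℕ} (h : Good N z) :
    Dss z = ↑((Finset.Icc 1 N ×ˢ Finset.Icc 1 N).filter
      fun p : ℕ × ℕ => p.2 < p.1 ∧ p.2 < z p.1 ∧ p.1 < z p.2) := by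
  ext ⟨p, q⟩
  simp only [Dss, Set.mem_setOf_eq, Finset.coe_filter, Finset.mem_product, Finset.mem_Icc]
  constructor
  · rintro ⟨h1, h2, h3, h4⟩
    refine ⟨?_, h3, h2, h4⟩
    have hq : q ≤ N := by
      by_contra hc
      have := h.tail q (by omega)
      unfold oneFPF at this
      split_ifs at this <;> omega
    have := (h.mem q).2 (Finset.mem_Icc.2 ⟨h1, hq⟩)
    rw [Finset.mem_Icc] at this
    omega
  · rintro ⟨h1, h2, h3, h4⟩
    exact ⟨h1.2.1, h3, h2, h4⟩

theorem FF_ell {N : ℕ} {z : Equiv.Perm ℕ} (h : Good N z) : 2 * FF N z = 4 * ellFpf z + N := by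
  have e1 : FF N z = ∑ p ∈ Finset.Icc 1 N, ∑ q ∈ Finset.Icc 1 N,
      if q < z p ∧ p < z q then 1 else 0 := by
    unfold FF
    refine Finset.sum_congr rfl fun x _ => ?_
    refine Finset.sum_equiv z (fun x => (h.mem x).symm) fun y hy => ?_
    rw [h.inv]
    congr 1
    exact propext and_comm
  have e2 : ellFpf z = ∑ p ∈ Finset.Icc 1 N, ∑ q ∈ Finset.Icc 1 N,
      if q < p ∧ q < z p ∧ p < z q then 1 else 0 := by
    unfold ellFpf
    rw [h.Dss_sub, Set.ncard_coe_finset, Finset.card_filter, Finset.sum_product]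
  have e3 : ellFpf z = ∑ p ∈ Finset.Icc 1 N, ∑ q ∈ Finset.Icc 1 N,
      if p < q ∧ q < z p ∧ p < z q then 1 else 0 := by
    rw [e2, Finset.sum_comm]
    refine Finset.sum_congr rfl fun x _ => Finset.sum_congr rfl fun y _ => ?_
    congr 1
    exact propext (by tauto)
  have e4 : FF N z = ellFpf z + ellFpf z + ∑ p ∈ Finset.Icc 1 N, if p < z p then 1 else 0 := by
    nth_rw 1 [e2]
    rw [e3, e1, ← Finset.sum_add_distrib, ← Finset.sum_add_distrib]
    refine Finset.sum_congr rfl fun p hp => ?_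
    have : (if p < z p then 1 else 0) = ∑ q ∈ Finset.Icc 1 N,
        if p = q then (if p < z p then 1 else 0) else 0 := by
      rw [Finset.sum_ite_eq, if_pos hp]
    rw [this, ← Finset.sum_add_distrib, ← Finset.sum_add_distrib]
    refine Finset.sum_congr rfl fun q hq => ?_
    rcases lt_trichotomy p q with h1 | h1 | h1
    · have h2 : ¬ q < p := by omega
      have h3 : p ≠ q := by omega
      simp [h1, h2, h3]
    · subst h1; simp
    · have h2 : ¬ p < q := by omega
      have h3 : p ≠ q := by omega
      simp [h1, h2, h3]
  have e5 : ∑ p ∈ Finset.Icc 1 N, (if p < z p then 1 else 0) =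
      ∑ p ∈ Finset.Icc 1 N, (if z p < p then 1 else 0) := by
    refine Finset.sum_equiv z (fun x => (h.mem x).symm) fun y hy => ?_
    rw [h.inv]
  have e6 : ∑ p ∈ Finset.Icc 1 N, (if p < z p then 1 else 0) +
      ∑ p ∈ Finset.Icc 1 N, (if z p < p then 1 else 0) = N := by
    rw [← Finset.sum_add_distrib]
    have : ∀ p ∈ Finset.Icc 1 N, ((if p < z p then 1 else 0) + (if z p < p then 1 else 0)) = 1 := by
      intro p hp
      have := h.fpf p (Finset.mem_Icc.1 hp).1
      split_ifs <;> omega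
    rw [Finset.sum_congr rfl this]
    simp
  omega

theorem ell_le {N : ℕ} {z : Equiv.Perm ℕ} (h : Good N z) : ellFpf z ≤ N * N := by
  unfold ellFpf
  rw [h.Dss_sub, Set.ncard_coe_finset]
  refine (Finset.card_filter_le _ _).trans ?_
  simp

theorem rnk_zero (w : Equiv.Perm ℕ) (q : ℕ) : rnk w 0 q = 0 := by simp [rnk]

theorem rnk_succ (w : Equiv.Perm ℕ) (p q : ℕ) :
    rnk w (p + 1) q = rnk w p q + if w (p + 1) ∈ Finset.Icc 1 q then 1 else 0 := by
  unfold rnk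
  rw [Finset.card_filter, Finset.card_filter, Finset.sum_Icc_succ_top (by omega)]

theorem rnk_swap {i j : ℕ} (w : Equiv.Perm ℕ) (hi : 1 ≤ i) (hij : i < j) (hw : w i < w j)
    (hpos : 1 ≤ w i) (p q : ℕ) : rnk w p q = rnk (w * Equiv.swap i j) p q +
      if i ≤ p ∧ p < j ∧ w i ≤ q ∧ q < w j then 1 else 0 := by
  induction p with
  | zero => rw [rnk_zero, rnk_zero, if_neg (by omega)]
  | succ p ih =>
    rw [rnk_succ, rnk_succ, ih]
    simp only [Finset.mem_Icc]
    by_cases h1 : p + 1 = i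
    · rw [h1]
      have : (w * Equiv.swap i j) i = w j := by simp
      rw [this]
      split_ifs <;> omega
    · by_cases h2 : p + 1 = j
      · rw [h2]
        have : (w * Equiv.swap i j) j = w i := by simp
        rw [this]
        split_ifs <;> omega
      · have : (w * Equiv.swap i j) (p + 1) = w (p + 1) := by
          rw [Equiv.Perm.mul_apply, Equiv.swap_apply_of_ne_of_ne h1 h2]
        rw [this]
        split_ifs <;> omega

theorem rnk_inv (w : Equiv.Perm ℕ) (p q : ℕ) : rnk w⁻¹ q p = rnk w p q := by
  unfold rnk
  symm
  refine Finset.card_bij' (fun a _ => w a) (fun a _ => w⁻¹ a) ?_ ?_ ?_ ?_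
  · intro a ha; simp only [Finset.mem_filter] at ha ⊢; simpa using ha.symm
  · intro a ha; simp only [Finset.mem_filter] at ha ⊢; simpa using ha.symm
  · intro a ha; simp
  · intro a ha; simp

theorem Good.inv_eq {N : ℕ} {z : Equiv.Perm ℕ} (h : Good N z) : z⁻¹ = z := by
  ext k; rw [Equiv.Perm.inv_eq_iff_eq, h.inv]

theorem Good.symm {N : ℕ} {z : Equiv.Perm ℕ} (h : Good N z) (p q : ℕ) :
    rnk z p q = rnk z q p := by
  rw [← rnk_inv z q p, h.inv_eq]

theorem rnk_conj {N i j : ℕ} {z : Equiv.Perm ℕ} (h : Good N z) (hi : 1 ≤ i) (hij : i < j)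
    (hj : j ≤ N) (hw : z i < z j) (hne : z i ≠ j) (p q : ℕ) :
    rnk z p q = rnk (Equiv.swap i j * z * Equiv.swap i j) p q +
      (if i ≤ p ∧ p < j ∧ z i ≤ q ∧ q < z j then 1 else 0) +
      (if i ≤ q ∧ q < j ∧ z i ≤ p ∧ p < z j then 1 else 0) := by
  have hne2 : z j ≠ i := fun hc => hne (by rw [← hc, h.inv])
  have hfi := h.fpf i hi
  have hfj := h.fpf j (by omega)
  have ti : (Equiv.swap i j * z) i = z i := by
    rw [Equiv.Perm.mul_apply, Equiv.swap_apply_of_ne_of_ne hfi hne]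
  have tj : (Equiv.swap i j * z) j = z j := by
    rw [Equiv.Perm.mul_apply, Equiv.swap_apply_of_ne_of_ne hne2 hfj]
  have e1 := rnk_swap z hi hij hw (h.pos hi) p q
  have e2 := rnk_inv (z * Equiv.swap i j) p q
  rw [mul_inv_rev, h.inv_eq, Equiv.swap_inv] at e2
  have e3 := rnk_swap (Equiv.swap i j * z) hi hij (by rw [ti, tj]; exact hw)
    (by rw [ti]; exact h.pos hi) q p
  rw [ti, tj] at e3
  have h' : Good N (Equiv.swap i j * z * Equiv.swap i j) :=
    h.conj (Finset.mem_Icc.2 (by omega)) (Finset.mem_Icc.2 (by omega))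
  rw [h'.symm p q]
  omega

theorem Good.even_rnk {N : ℕ} {z : Equiv.Perm ℕ} (h : Good N z) (p : ℕ) : Even (rnk z p p) := by
  unfold rnk
  rw [← ZMod.natCast_eq_zero_iff_even, Finset.card_eq_sum_ones, Nat.cast_sum]
  refine Finset.sum_involution (fun a _ => z a) ?_ ?_ ?_ ?_
  · intro a ha; decide
  · intro a ha _
    simp only [Finset.mem_filter, Finset.mem_Icc] at ha
    exact h.fpf a ha.1.1
  · intro a ha
    simp only [Finset.mem_filter, h.inv] at ha ⊢
    exact ha.symm
  · intro a ha; exact h.inv a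

/-- a implies b, all indices -/
theorem rnk_of_bruhat {z y : Equiv.Perm ℕ} (hz : ∃ N, Good N z) (hzy : fpfBruhatLe z y) :
    (∃ N, Good N y) ∧ ∀ p q, rnk y p q ≤ rnk z p q := by
  unfold fpfBruhatLe at hzy
  induction hzy with
  | refl => exact ⟨hz, fun p q => le_rfl⟩
  | tail _ hbc ih =>
    obtain ⟨⟨N₀, hN₀⟩, ih⟩ := ih
    obtain ⟨i, j, hi, hij, rfl, hell⟩ := hbc
    rename_i b _
    have hg : Good (N₀ + 2 * j) b :=
      hN₀.mono (hN₀.even.add (even_two_mul j)) (by omega)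
    set N := N₀ + 2 * j with hN
    have hj : j ≤ N := by omega
    have hg' : Good N (Equiv.swap i j * b * Equiv.swap i j) :=
      hg.conj (Finset.mem_Icc.2 (by omega)) (Finset.mem_Icc.2 (by omega))
    refine ⟨⟨N, hg'⟩, fun p q => le_trans ?_ (ih p q)⟩
    have hne : b i ≠ j := by
      intro hb
      have hb2 : b j = i := by rw [← hb, hg.inv]
      have : Equiv.swap i j * b * Equiv.swap i j = b := by
        rw [← hb, mul_assoc, Equiv.mul_swap_eq_swap_mul, hg.inv, Equiv.swap_comm (b i) i,
          Equiv.swap_mul_self_mul]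
      rw [this] at hell
      omega
    have hlt : b i < b j := by
      by_contra hc
      have hne2 : b j ≠ i := fun hc => hne (by rw [← hc, hg.inv])
      have hfi := hg.fpf i hi
      have hfj := hg.fpf j (by omega)
      have hji : b i ≠ b j := fun hc => hij.ne (b.injective hc)
      have ti : (Equiv.swap i j * b * Equiv.swap i j) i = b j := by
        simp only [Equiv.Perm.mul_apply, Equiv.swap_apply_left]
        rw [Equiv.swap_apply_of_ne_of_ne hne2 hfj]
      have tj : (Equiv.swap i j * b * Equiv.swap i j) j = b i := by
        simp only [Equiv.Perm.mul_apply, Equiv.swap_apply_right]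
        rw [Equiv.swap_apply_of_ne_of_ne hfi hne]
      obtain ⟨e, he, _⟩ := FF_conj hg' hi hij hj (by rw [ti, tj]; omega) (by rw [ti]; exact hfj)
      have hs : Equiv.swap i j * (Equiv.swap i j * b * Equiv.swap i j) * Equiv.swap i j = b := by
        simp [mul_assoc]
      rw [hs] at he
      have h1 := FF_ell hg
      have h2 := FF_ell hg'
      omega
    have := rnk_conj hg hi hij hj hlt hne p q
    omega

/-- extension of the rank inequalities -/
theorem rnk_extend {n N : ℕ} {y z : Equiv.Perm ℕ} (hy : Good N y) (hz : Good N z)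
    (hD : Dss z ⊆ Set.Icc 1 n ×ˢ Set.Icc 1 n)
    (H : ∀ i j : ℕ, 1 ≤ i → i ≤ n → 1 ≤ j → j ≤ n → rnk y i j ≤ rnk z i j) :
    ∀ s p q, p + q = s → rnk y p q ≤ rnk z p q := by
  intro s
  induction s using Nat.strong_induction_on with
  | _ s ih =>
  intro p q hs
  by_contra hc
  push Not at hc
  rcases p with _ | p
  · rw [rnk_zero, rnk_zero] at hc; omega
  rcases q with _ | q
  · rw [hy.symm, hz.symm, rnk_zero, rnk_zero] at hc; omega
  have hp1 := hz.pos (i := p + 1) (by omega)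
  have hq1 := hz.pos (i := q + 1) (by omega)
  have hzp : q + 1 < z (p + 1) := by
    by_contra hcc
    have h1 := rnk_succ z p (q + 1)
    have h2 := rnk_succ y p (q + 1)
    have h3 := ih (p + (q + 1)) (by omega) p (q + 1) rfl
    rw [if_pos (Finset.mem_Icc.2 ⟨hp1, by omega⟩)] at h1
    split_ifs at h2 <;> omega
  have hzq : p + 1 < z (q + 1) := by
    by_contra hcc
    have h1 := rnk_succ z q (p + 1)
    have h2 := rnk_succ y q (p + 1)
    have h3 := ih (q + (p + 1)) (by omega) q (p + 1) rfl
    rw [hy.symm, hz.symm (p + 1)] at hc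
    rw [if_pos (Finset.mem_Icc.2 ⟨hq1, by omega⟩)] at h1
    split_ifs at h2 <;> omega
  rcases lt_trichotomy p q with hpq | hpq | hpq
  · have : (q + 1, p + 1) ∈ Dss z := by simp only [Dss, Set.mem_setOf_eq]; omega
    have := hD this
    simp only [Set.mem_prod, Set.mem_Icc] at this
    have := H (p + 1) (q + 1) (by omega) (by omega) (by omega) (by omega)
    omega
  · subst hpq
    obtain ⟨a, ha⟩ := hy.even_rnk (p + 1)
    obtain ⟨b, hb⟩ := hz.even_rnk (p + 1)
    have h1 := rnk_succ z p (p + 1)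
    have h2 := rnk_succ y p (p + 1)
    have h3 := ih (p + (p + 1)) (by omega) p (p + 1) rfl
    rw [if_neg (by rw [Finset.mem_Icc]; omega)] at h1
    split_ifs at h2 <;> omega
  · have : (p + 1, q + 1) ∈ Dss z := by simp only [Dss, Set.mem_setOf_eq]; omega
    have := hD this
    simp only [Set.mem_prod, Set.mem_Icc] at this
    have := H (p + 1) (q + 1) (by omega) (by omega) (by omega) (by omega)
    omega

/-- comparison along a row -/
theorem row_cmp {y z : Equiv.Perm ℕ} {i j a b : ℕ} (hi : 1 ≤ i)
    (hag : ∀ k, k < i → y k = z k) (ha : z i = a) (hb : y i = b) (ha1 : 1 ≤ a) 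
    (hj : ∀ k, i < k → k < j → ¬ (a < z k ∧ z k ≤ b))
    (q q' : ℕ) (hq : a ≤ q) (hqq : q ≤ q') (hq' : q' ≤ b) (p : ℕ) (hp : i ≤ p) (hpj : p < j) :
    rnk y p q + rnk z p q' + (if q < b ∧ b ≤ q' then 1 else 0) ≤ rnk z p q + rnk y p q' := by
  induction p, hp using Nat.le_induction with
  | base =>
    obtain ⟨i, rfl⟩ : ∃ i', i = i' + 1 := ⟨i - 1, by omega⟩
    have e : ∀ q, rnk y i q = rnk z i q := by
      intro q
      unfold rnk
      congr 1
      refine Finset.filter_congr fun k hk => ?_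
      rw [hag k (by rw [Finset.mem_Icc] at hk; omega)]
    simp only [rnk_succ, e, ha, hb, Finset.mem_Icc]
    split_ifs <;> omega
  | succ p hp ih =>
    have ih := ih (by omega)
    have h1 := hj (p + 1) (by omega) hpj
    simp only [rnk_succ, Finset.mem_Icc]
    split_ifs at ih ⊢ <;> omega

theorem exists_step {N : ℕ} {y z : Equiv.Perm ℕ} (hy : Good N y) (hz : Good N z)
    (H : ∀ p q, rnk y p q ≤ rnk z p q) (hne : y ≠ z) :
    ∃ i j, 1 ≤ i ∧ i < j ∧ j ≤ N ∧
      ellFpf (Equiv.swap i j * z * Equiv.swap i j) = ellFpf z + 1 ∧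
      ∀ p q, rnk y p q ≤ rnk (Equiv.swap i j * z * Equiv.swap i j) p q := by
  classical
  have hex : ∃ i, y i ≠ z i := by
    by_contra hc; push Not at hc; exact hne (Equiv.ext hc)
  obtain ⟨i, hi, hmin⟩ : ∃ i, y i ≠ z i ∧ ∀ k, k < i → y k = z k :=
    ⟨Nat.find hex, Nat.find_spec hex, fun k hk => by simpa using Nat.find_min hex hk⟩
  have hi1 : 1 ≤ i := by
    rcases i with _ | i
    · rw [hy.zero, hz.zero] at hi; exact absurd rfl hi
    · omega
  have hiN : i ≤ N := by
    by_contra hc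
    exact hi (by rw [hy.tail i (by omega), hz.tail i (by omega)])
  obtain ⟨a, ha⟩ : ∃ a, z i = a := ⟨_, rfl⟩
  obtain ⟨b, hb⟩ : ∃ b, y i = b := ⟨_, rfl⟩
  have ha1 : 1 ≤ a := ha ▸ hz.pos hi1
  have hb1 : 1 ≤ b := hb ▸ hy.pos hi1
  have hza : z a = i := by rw [← ha, hz.inv]
  have hyb : y b = i := by rw [← hb, hy.inv]
  have hbN : b ≤ N := by
    have := (hy.mem i).2 (Finset.mem_Icc.2 ⟨hi1, hiN⟩)
    rw [hb, Finset.mem_Icc] at this; exact this.2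
  rw [ha, hb] at hi
  have hia : i < a := by
    have h1 : a ≠ i := ha ▸ hz.fpf i hi1
    by_contra hc
    have := hmin a (by omega)
    rw [hza] at this
    exact hi (by rw [← hb, ← this, hy.inv])
  have hab : a < b := by
    by_contra hc
    have h1 := H i b
    obtain ⟨i, rfl⟩ : ∃ i', i = i' + 1 := ⟨i - 1, by omega⟩
    have e : rnk y i b = rnk z i b := by
      unfold rnk
      congr 1
      refine Finset.filter_congr fun k hk => ?_
      rw [hmin k (by rw [Finset.mem_Icc] at hk; omega)]
    rw [rnk_succ, rnk_succ, e, ha, hb, if_pos (Finset.mem_Icc.2 ⟨hb1, le_rfl⟩),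
      if_neg (by rw [Finset.mem_Icc]; omega)] at h1
    omega
  have hex2 : ∃ j, i < j ∧ a < z j ∧ z j ≤ b := by
    refine ⟨z b, ?_, by rw [hz.inv]; exact hab, by rw [hz.inv]⟩
    by_contra hc
    have h1 : z b ≠ i := fun h => by
      have : b = a := by rw [← ha, ← h, hz.inv]
      omega
    have h2 := hmin (z b) (by omega)
    rw [hz.inv] at h2
    exact h1 (by rw [← hyb, ← h2, hy.inv, h2])
  obtain ⟨j, ⟨hij, haz, hzb⟩, hjmin⟩ : ∃ j, (i < j ∧ a < z j ∧ z j ≤ b) ∧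
      ∀ k, k < j → ¬ (i < k ∧ a < z k ∧ z k ≤ b) :=
    ⟨Nat.find hex2, Nat.find_spec hex2, fun k hk => Nat.find_min hex2 hk⟩
  obtain ⟨c, hc⟩ : ∃ c, z j = c := ⟨_, rfl⟩
  rw [hc] at haz hzb
  have hzc : z c = j := by rw [← hc, hz.inv]
  have hcj : c ≠ j := hc ▸ hz.fpf j (by omega)
  have hja : j ≠ a := by rintro rfl; omega
  have hjN : j ≤ N := by
    have := (hz.mem c).2 (Finset.mem_Icc.2 ⟨by omega, by omega⟩)
    rw [hzc, Finset.mem_Icc] at this; exact this.2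
  have row := row_cmp (j := j) hi1 hmin ha hb ha1 (fun k h1 h2 h3 => hjmin k h2 ⟨h1, h3⟩)
  have hD1 : ∀ p q, i ≤ p → p < j → a ≤ q → q < b → rnk y p q + 1 ≤ rnk z p q := by
    intro p q h1 h2 h3 h4
    have := row q b h3 h4.le le_rfl p h1 h2
    rw [if_pos ⟨h4, le_rfl⟩] at this
    have := H p b
    omega
  have hD2' : ∀ p q, q ≤ p → p < j → a ≤ q → p < b → rnk y p q + 2 ≤ rnk z p q := by
    intro p q h1 h2 h3 h4
    have h5 := row q p h3 h1 h4.le p (by omega) h2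
    have h6 := hD1 p p (by omega) h2 (by omega) h4
    obtain ⟨u, hu⟩ := hy.even_rnk p
    obtain ⟨v, hv⟩ := hz.even_rnk p
    omega
  have hD2 : ∀ p q, a ≤ p → a ≤ q → p < j → q < j → p < b → q < b →
      rnk y p q + 2 ≤ rnk z p q := by
    intro p q h1 h2 h3 h4 h5 h6
    rcases le_total q p with h | h
    · exact hD2' p q h h3 h2 h5
    · rw [hy.symm, hz.symm p]; exact hD2' q p h h4 h1 h6
  -- the two cases
  suffices hfin : ∃ J C, i < J ∧ J ≤ N ∧ a < C ∧ z J = C ∧ a ≠ J ∧ (J < a ∨ C < J) ∧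
      (∀ k, i < k → k < J → a < z k → z k < C → False) ∧
      (∀ p q, i ≤ p → p < J → a ≤ q → q < C → rnk y p q + 1 ≤ rnk z p q) ∧
      (∀ p q, a ≤ p → a ≤ q → p < J → q < J → p < C → q < C → rnk y p q + 2 ≤ rnk z p q) by
    obtain ⟨J, C, g1, g2, g3, g4, g5, g6, g7, g8, g9⟩ := hfin
    have hlt : z i < z J := by rw [ha, g4]; exact g3
    have hne' : z i ≠ J := by rw [ha]; exact g5
    refine ⟨i, J, hi1, g1, g2, ?_, ?_⟩
    · obtain ⟨e, he1, he2⟩ := FF_conj hz hi1 g1 g2 hlt hne'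
      rw [ha, g4] at he2
      have he := he2 g7 hia g6
      have hg' := hz.conj (i := i) (j := J) (Finset.mem_Icc.2 ⟨hi1, hiN⟩)
        (Finset.mem_Icc.2 ⟨by omega, g2⟩)
      have h1 := FF_ell hz
      have h2 := FF_ell hg'
      omega
    · intro p q
      have h1 := rnk_conj hz hi1 g1 g2 hlt hne' p q
      rw [ha, g4] at h1
      have h2 := H p q
      split_ifs at h1 with c1 c2 c2
      · have := g9 p q (by omega) (by omega) (by omega) (by omega) (by omega) (by omega)
        omega
      · have := g8 p q (by omega) (by omega) (by omega) (by omega)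
        omega
      · have := g8 q p (by omega) (by omega) (by omega) (by omega)
        rw [hy.symm, hz.symm q] at this
        omega
      · omega
  by_cases hcase : a < j ∧ j < c
  · refine ⟨c, j, by omega, by omega, hcase.1, hzc, by omega, Or.inr hcase.2, ?_, ?_, ?_⟩
    · intro k h1 h2 h3 h4
      have hkj : ¬ k < j := fun h => hjmin k h ⟨h1, h3, by omega⟩
      exact hjmin (z k) h4 ⟨by omega, by rw [hz.inv]; omega, by rw [hz.inv]; omega⟩
    · intro p q h1 h2 h3 h4
      by_cases hpj : p < j
      · exact hD1 p q h1 hpj h3 (by omega)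
      · rw [hy.symm, hz.symm p]
        exact hD1 q p (by omega) h4 (by omega) (by omega)
    · intro p q h1 h2 h3 h4 h5 h6
      exact hD2 p q h1 h2 h5 h6 (by omega) (by omega)
  · refine ⟨j, c, hij, hjN, haz, hc, hja.symm, by omega, ?_, ?_, ?_⟩
    · intro k h1 h2 h3 h4
      exact hjmin k h2 ⟨h1, h3, by omega⟩
    · intro p q h1 h2 h3 h4
      exact hD1 p q h1 h2 h3 (by omega)
    · intro p q h1 h2 h3 h4 h5 h6
      exact hD2 p q h1 h2 h3 h4 (by omega) (by omega)

theorem bruhat_of_rnk {N : ℕ} {y : Equiv.Perm ℕ} (hy : Good N y) : ∀ (m : ℕ) (z : Equiv.Perm ℕ),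
    Good N z → (∀ p q, rnk y p q ≤ rnk z p q) → N * N - ellFpf z ≤ m → fpfBruhatLe z y := by
  intro m
  induction m with
  | zero =>
    intro z hz H hm
    by_cases hne : y = z
    · subst hne; exact Relation.ReflTransGen.refl
    · obtain ⟨i, j, hi, hij, hj, hell, _⟩ := exists_step hy hz H hne
      have hg' := hz.conj (i := i) (j := j) (Finset.mem_Icc.2 ⟨hi, by omega⟩)
        (Finset.mem_Icc.2 ⟨by omega, hj⟩)
      have := ell_le hg'
      omega
  | succ m ih =>
    intro z hz H hm
    by_cases hne : y = z
    · subst hne; exact Relation.ReflTransGen.refl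
    · obtain ⟨i, j, hi, hij, hj, hell, H'⟩ := exists_step hy hz H hne
      have hg' := hz.conj (i := i) (j := j) (Finset.mem_Icc.2 ⟨hi, by omega⟩)
        (Finset.mem_Icc.2 ⟨by omega, hj⟩)
      exact Relation.ReflTransGen.head ⟨i, j, hi, hij, rfl, hell⟩
        (ih _ hg' H' (by have := ell_le hg'; omega))

/-- the skew permutation matrix -/
def skewMat (K : Type*) [Field K] (n : ℕ) (y : Equiv.Perm ℕ) : Matrix (Fin n) (Fin n) K :=
  Matrix.of fun p q => if y (p + 1) = q + 1 then (if p < q then 1 else -1) else 0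

theorem skewMat_mem (K : Type*) [Field K] (n N : ℕ) {y : Equiv.Perm ℕ} (hy : Good N y) :
    skewMat K n y ∈ MatSS K n := by
  constructor
  · ext p q
    simp only [Matrix.transpose_apply, Matrix.neg_apply, skewMat, Matrix.of_apply]
    by_cases h : y (p + 1) = q + 1
    · have h2 : y (q + 1) = p + 1 := by rw [← h, hy.inv]
      have h3 : p ≠ q := by
        rintro rfl; exact hy.fpf _ (by omega) h
      rw [if_pos h, if_pos h2]
      rcases lt_or_gt_of_ne h3 with h4 | h4
      · rw [if_pos h4, if_neg (not_lt.2 h4.le)]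
      · rw [if_pos h4, if_neg (not_lt.2 h4.le), neg_neg]
    · have h2 : ¬ y (q + 1) = p + 1 := fun h2 => h (by rw [← h2, hy.inv])
      rw [if_neg h, if_neg h2, neg_zero]
  · intro i
    simp only [skewMat, Matrix.of_apply]
    rw [if_neg (hy.fpf _ (by omega))]

theorem skewMat_rank (K : Type*) [Field K] (n N : ℕ) {y : Equiv.Perm ℕ} (hy : Good N y)
    (i j : ℕ) (hi : i ≤ n) (hj : j ≤ n) :
    ((skewMat K n y).submatrix (Fin.castLE hi) (Fin.castLE hj)).rank = rnk y i j := by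
  classical
  rw [Matrix.rank_eq_finrank_span_row]
  let Q : Finset (Fin j) := Finset.univ.filter fun q => y (q + 1) ≤ i
  let f : Q → (Fin j → K) := fun q => Pi.single q.1 1
  have hli : LinearIndependent K f := by
    have := (Pi.basisFun K (Fin j)).linearIndependent.comp (fun q : Q => q.1)
      Subtype.val_injective
    convert this using 1
    ext q; simp [f]
  have hspan : Submodule.span K (Set.range
      ((skewMat K n y).submatrix (Fin.castLE hi) (Fin.castLE hj)).row) =
      Submodule.span K (Set.range f) := by
    apply le_antisymm
    · rw [Submodule.span_le]
      rintro _ ⟨p, rfl⟩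
      by_cases h : ∃ q : Fin j, y (p + 1) = q + 1
      · obtain ⟨q, hq⟩ := h
        have hqQ : q ∈ Q := by
          simp only [Q, Finset.mem_filter, Finset.mem_univ, true_and]
          rw [← hq, hy.inv]; omega
        have : ((skewMat K n y).submatrix (Fin.castLE hi) (Fin.castLE hj)).row p =
            (if Fin.castLE hi p < Fin.castLE hj q then (1 : K) else -1) • f ⟨q, hqQ⟩ := by
          ext q'
          simp only [Matrix.row, Matrix.submatrix_apply, skewMat, Matrix.of_apply,
            Pi.smul_apply, f, smul_eq_mul, Fin.val_castLE]
          by_cases hqq : q' = q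
          · subst hqq; rw [if_pos hq]; simp
          · rw [if_neg, Pi.single_eq_of_ne hqq, mul_zero]
            rw [hq]; intro h; apply hqq; ext; omega
        rw [this]
        exact Submodule.smul_mem _ _ (Submodule.subset_span ⟨_, rfl⟩)
      · have : ((skewMat K n y).submatrix (Fin.castLE hi) (Fin.castLE hj)).row p = 0 := by
          ext q'
          simp only [Matrix.row, Matrix.submatrix_apply, skewMat, Matrix.of_apply, Fin.val_castLE]
          rw [if_neg]
          · rfl
          · exact fun hh => h ⟨q', hh⟩
        rw [this]
        exact Submodule.zero_mem _
    · rw [Submodule.span_le]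
      rintro _ ⟨⟨q, hqQ⟩, rfl⟩
      simp only [Q, Finset.mem_filter, Finset.mem_univ, true_and] at hqQ
      have hpos := hy.pos (i := (q : ℕ) + 1) (by omega)
      let p : Fin i := ⟨y (q + 1) - 1, by omega⟩
      have hp : (p : ℕ) + 1 = y (q + 1) := by simp only [p]; omega
      have hq : y (p + 1) = q + 1 := by rw [hp, hy.inv]
      have hne : (if Fin.castLE hi p < Fin.castLE hj q then (1 : K) else -1) ≠ 0 := by
        split_ifs <;> simp
      have : ((skewMat K n y).submatrix (Fin.castLE hi) (Fin.castLE hj)).row p =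
            (if Fin.castLE hi p < Fin.castLE hj q then (1 : K) else -1) •
              (Pi.single q 1 : Fin j → K) := by
        ext q'
        simp only [Matrix.row, Matrix.submatrix_apply, skewMat, Matrix.of_apply,
          Pi.smul_apply, smul_eq_mul, Fin.val_castLE]
        by_cases hqq : q' = q
        · subst hqq; rw [if_pos hq]; simp
        · rw [if_neg, Pi.single_eq_of_ne hqq, mul_zero]
          rw [hq]; intro h; apply hqq; ext; omega
      have h2 : f ⟨q, by simpa [Q] using hqQ⟩ =
          (if Fin.castLE hi p < Fin.castLE hj q then (1 : K) else -1)⁻¹ •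
            ((skewMat K n y).submatrix (Fin.castLE hi) (Fin.castLE hj)).row p := by
        rw [this, smul_smul, inv_mul_cancel₀ hne, one_smul]
      rw [h2]
      exact Submodule.smul_mem _ _ (Submodule.subset_span ⟨_, rfl⟩)
  rw [hspan, finrank_span_eq_card hli, Fintype.card_coe, hy.symm]
  unfold rnk
  refine Finset.card_bij (fun q _ => (q : ℕ) + 1) ?_ ?_ ?_
  · intro q hq
    simp only [Q, Finset.mem_filter, Finset.mem_univ, true_and] at hq
    have hpos := hy.pos (i := (q : ℕ) + 1) (by omega)
    simp only [Finset.mem_filter, Finset.mem_Icc]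
    omega
  · intro q _ q' _ h
    ext; omega
  · intro k hk
    simp only [Finset.mem_filter, Finset.mem_Icc] at hk
    refine ⟨⟨k - 1, by omega⟩, ?_, by simp only; omega⟩
    simp only [Q, Finset.mem_filter, Finset.mem_univ, true_and]
    rw [Nat.sub_add_cancel hk.1.1]
    exact hk.2.2

/-- For `y, z ∈ FPF_n(I_n)` the following are equivalent:
(a) `y ≥ z` in the Bruhat order on `I^FPF_∞`;
(b) `r_y(i,j) ≤ r_z(i,j)` for all `(i,j) ∈ [n] × [n]`;
(c) `X^ss_y ⊆ X^ss_z`. -/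
theorem statement3 (K : Type*) [Field K] [IsAlgClosed K] (n : ℕ) (hn : 1 ≤ n)
    (y z : Equiv.Perm ℕ) (hy : y ∈ FPFIn n) (hz : z ∈ FPFIn n) :
    (fpfBruhatLe z y ↔
        ∀ i j : ℕ, 1 ≤ i → i ≤ n → 1 ≤ j → j ≤ n → rnk y i j ≤ rnk z i j) ∧
      (fpfBruhatLe z y ↔ Xss K n y ⊆ Xss K n z) := by
  have hab : fpfBruhatLe z y ↔
        ∀ i j : ℕ, 1 ≤ i → i ≤ n → 1 ≤ j → j ≤ n → rnk y i j ≤ rnk z i j := by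
    constructor
    · intro h i j _ _ _ _
      exact (rnk_of_bruhat (good_of hz.1) h).2 i j
    · intro H
      obtain ⟨N₁, h₁⟩ := good_of hy.1
      obtain ⟨N₂, h₂⟩ := good_of hz.1
      have hev : Even (N₁ + N₂) := h₁.even.add h₂.even
      have gy : Good (N₁ + N₂) y := h₁.mono hev (by omega)
      have gz : Good (N₁ + N₂) z := h₂.mono hev (by omega)
      exact bruhat_of_rnk gy _ z gz (fun p q => rnk_extend gy gz hz.2 H _ p q rfl) le_rfl
  refine ⟨hab, hab.trans ⟨?_, ?_⟩⟩
  · intro H A hA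
    exact ⟨hA.1, fun i j hi hj hi1 hj1 => (hA.2 i j hi hj hi1 hj1).trans (H i j hi1 hi hj1 hj)⟩
  · intro H i j hi1 hi hj1 hj
    obtain ⟨N, gy⟩ := good_of hy.1
    have hA : skewMat K n y ∈ Xss K n y :=
      ⟨skewMat_mem K n N gy, fun i j hi hj _ _ => (skewMat_rank K n N gy i j hi hj).le⟩
    have := (H hA).2 i j hi hj hi1 hj1
    rwa [skewMat_rank K n N gy] at this

end Paper
end

section
/- Let K be an algebraically closed field, let n >= 1, fix i, j in [n] with i >= j, and fix an integer r >= 0. For any A in Mat^ss_n(K), one has rank(A_{[i][j]}) <= r if and only if pf(A_{RR}) = 0 for every nonempty even-size subset R of [i] with |R intersect [j]| > r. -/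
namespace Paper

/-- embedding skipping `0` and `k+1` -/
def skip2 {N : ℕ} (k : Fin (N+1)) (x : Fin N) : Fin (N+2) := (k.succAbove x).succ

theorem skip2_lt {N : ℕ} (k : Fin (N+1)) (x y : Fin N) : skip2 k x < skip2 k y ↔ x < y := by
  simp [skip2, Fin.succAbove_lt_succAbove_iff]

theorem skip2_inj {N : ℕ} (k : Fin (N+1)) (x y : Fin N) : skip2 k x = skip2 k y ↔ x = y := by
  simp [skip2]

theorem skip2_cases {N : ℕ} (k : Fin (N+1)) (y : Fin (N+2)) :
    y = 0 ∨ y = k.succ ∨ ∃ x, y = skip2 k x := by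
  rcases Fin.eq_zero_or_eq_succ y with h | ⟨y, rfl⟩
  · exact Or.inl h
  · by_cases h : y = k
    · subst h; exact Or.inr (Or.inl rfl)
    · obtain ⟨x, rfl⟩ := Fin.exists_succAbove_eq h
      exact Or.inr (Or.inr ⟨x, rfl⟩)

theorem skip2_ne_zero {N : ℕ} (k : Fin (N+1)) (x : Fin N) : skip2 k x ≠ 0 := Fin.succ_ne_zero _

theorem skip2_ne_succ {N : ℕ} (k : Fin (N+1)) (x : Fin N) : skip2 k x ≠ k.succ := by
  simp [skip2]

theorem exists_ext {N : ℕ} (k : Fin (N+1)) (z : Equiv.Perm (Fin N)) (hz : ∀ i, z (z i) = i) :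
    ∃ w : Equiv.Perm (Fin (N+2)), w 0 = k.succ ∧ w k.succ = 0 ∧ (∀ x, w (skip2 k x) = skip2 k (z x))
      ∧ ∀ i, w (w i) = i := by
  classical
  let f : Fin (N+2) → Fin (N+2) := fun y =>
    if y = 0 then k.succ else if y = k.succ then 0 else
      if h : ∃ x, y = skip2 k x then skip2 k (z h.choose) else y
  have f0 : f 0 = k.succ := by simp [f]
  have f1 : f k.succ = 0 := by simp [f]
  have f2 : ∀ x, f (skip2 k x) = skip2 k (z x) := by
    intro x
    have h : ∃ x', skip2 k x = skip2 k x' := ⟨x, rfl⟩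
    have h2 := h.choose_spec
    simp only [f, skip2_ne_zero, skip2_ne_succ, if_false, dif_pos h]
    rw [skip2_inj] at h2
    rw [← h2]
  have hf : Function.Involutive f := by
    intro y
    rcases skip2_cases k y with rfl | rfl | ⟨x, rfl⟩
    · rw [f0, f1]
    · rw [f1, f0]
    · rw [f2, f2, hz]
  exact ⟨hf.toPerm, f0, f1, f2, hf⟩

theorem exists_restr {N : ℕ} (w : Equiv.Perm (Fin (N+2))) (h1 : ∀ i, w i ≠ i)
    (h2 : ∀ i, w (w i) = i) :
    ∃ (k : Fin (N+1)) (z : Equiv.Perm (Fin N)), w 0 = k.succ ∧ (∀ x, w (skip2 k x) = skip2 k (z x))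
      ∧ (∀ i, z i ≠ i) ∧ ∀ i, z (z i) = i := by
  obtain ⟨k, hk⟩ := Fin.exists_succ_eq.mpr (h1 0)
  have hk' : w k.succ = 0 := by rw [hk, h2]
  have : ∀ x, ∃ y, w (skip2 k x) = skip2 k y := by
    intro x
    rcases skip2_cases k (w (skip2 k x)) with h | h | h
    · exact absurd (w.injective (h.trans hk'.symm)) (skip2_ne_succ k x)
    · exact absurd (w.injective (h.trans hk)) (skip2_ne_zero k x)
    · exact h
  choose f hf using this
  have hinv : Function.Involutive f := by
    intro x
    rw [← skip2_inj k, ← hf, ← hf, h2]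
  refine ⟨k, hinv.toPerm, hk.symm, hf, ?_, hinv⟩
  intro x hx
  apply h1 (skip2 k x)
  rw [hf]
  exact congrArg _ hx

theorem ellFpfFin_eq {N : ℕ} (z : Equiv.Perm (Fin N)) :
    ellFpfFin z = ∑ i, ∑ j, if j < i ∧ j < z i ∧ i < z j then 1 else 0 := by
  rw [ellFpfFin, Finset.card_filter, Fintype.sum_prod_type]

theorem ell_ext {N : ℕ} (k : Fin (N+1)) (z : Equiv.Perm (Fin N)) (w : Equiv.Perm (Fin (N+2)))
    (h0 : w 0 = k.succ) (h1 : w k.succ = 0) (h2 : ∀ x, w (skip2 k x) = skip2 k (z x)) :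
    ellFpfFin w = k + ellFpfFin z := by
  have key : ∀ f : Fin (N+2) → ℕ, ∑ i, f i = f 0 + (f k.succ + ∑ x, f (skip2 k x)) := by
    intro f
    rw [Fin.sum_univ_succ, Fin.sum_univ_succAbove _ k]; rfl
  have hlt : ∀ x, ((0 : Fin (N+2)) < skip2 k x) := fun x => Fin.succ_pos _
  rw [ellFpfFin_eq, Finset.sum_comm, key]
  congr 1
  · have : ∀ i : Fin (N+2), (if (0 : Fin (N+2)) < i ∧ 0 < w i ∧ i < w 0 then 1 else 0)
      = if 0 < i ∧ i < k.succ then 1 else 0 := by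
      intro i
      rw [h0]
      congr 1
      apply propext
      constructor
      · tauto
      · rintro ⟨a, b⟩
        refine ⟨a, ?_, b⟩
        rw [Fin.pos_iff_ne_zero]
        intro h
        have := w.injective (h.trans h1.symm)
        omega
    simp_rw [this]
    rw [Finset.sum_boole]
    have : (Finset.univ.filter fun i : Fin (N+2) => 0 < i ∧ i < k.succ) = Finset.Ioo 0 k.succ := by
      ext; simp
    rw [this]
    simp
  · rw [show (∑ i, if k.succ < i ∧ k.succ < w i ∧ i < w k.succ then 1 else 0) = 0 by
      apply Finset.sum_eq_zero; intro i _; rw [h1]; simp]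
    rw [zero_add, ellFpfFin_eq, Finset.sum_comm]
    conv_rhs => rw [Finset.sum_comm]
    rw [Finset.sum_comm]
    apply Finset.sum_congr rfl
    intro j _
    rw [key]
    simp [h0, h1, h2, skip2_lt]

theorem prod_ext {K : Type*} [CommRing K] {N : ℕ} (k : Fin (N+1)) (z : Equiv.Perm (Fin N))
    (w : Equiv.Perm (Fin (N+2))) (A : Matrix (Fin (N+2)) (Fin (N+2)) K)
    (h0 : w 0 = k.succ) (h1 : w k.succ = 0) (h2 : ∀ x, w (skip2 k x) = skip2 k (z x)) :
    ∏ i ∈ Finset.univ.filter (fun i => w i < i), A (w i) i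
      = A 0 k.succ * ∏ i ∈ Finset.univ.filter (fun i => z i < i),
          (A.submatrix (skip2 k) (skip2 k)) (z i) i := by
  rw [Finset.prod_filter, Finset.prod_filter, Fin.prod_univ_succ, Fin.prod_univ_succAbove _ k]
  have : ∀ x, (k.succAbove x).succ = skip2 k x := fun _ => rfl
  simp [this, h1, h2, skip2_lt]

theorem pf_expand {K : Type*} [CommRing K] {N : ℕ} (A : Matrix (Fin (N+2)) (Fin (N+2)) K) :
    Pfaffian A = ∑ k : Fin (N+1), (-1)^(k:ℕ) * A 0 k.succ *
      Pfaffian (A.submatrix (skip2 k) (skip2 k)) := by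
  classical
  unfold Pfaffian
  simp_rw [Finset.mul_sum]
  rw [Finset.sum_sigma']
  symm
  have ex := fun (p : (_ : Fin (N+1)) × Equiv.Perm (Fin N))
    (hp : p ∈ Finset.univ.sigma (fun _ : Fin (N+1) => Finset.univ.filter
      (fun z : Equiv.Perm (Fin N) => (∀ i, z i ≠ i) ∧ ∀ i, z (z i) = i))) =>
    exists_ext p.1 p.2 (by simp at hp; exact hp.2)
  choose F F0 F1 F2 F3 using ex
  refine Finset.sum_bij F ?_ ?_ ?_ ?_
  · intro p hp
    have hp' := hp
    simp only [Finset.mem_sigma, Finset.mem_univ, true_and, Finset.mem_filter] at hp' ⊢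
    refine ⟨?_, F3 p hp⟩
    intro i
    rcases skip2_cases p.1 i with rfl | rfl | ⟨x, rfl⟩
    · rw [F0]; exact Fin.succ_ne_zero _
    · rw [F1]; exact (Fin.succ_ne_zero _).symm
    · rw [F2, Ne, skip2_inj]; exact hp'.1 x
  · rintro ⟨k, z⟩ hp ⟨k', z'⟩ hq h
    have e0 : k = k' := by
      have := F0 _ hp
      rw [h, F0] at this
      exact (Fin.succ_injective _ this).symm
    subst e0
    have : z = z' := by
      ext x
      have := F2 _ hp x
      rw [h, F2] at this
      simp only [skip2_inj] at this
      rw [this]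
    rw [this]
  · intro w hw
    simp only [Finset.mem_univ, true_and, Finset.mem_filter] at hw
    obtain ⟨k, z, a, b, c, d⟩ := exists_restr w hw.1 hw.2
    refine ⟨⟨k, z⟩, by simp [c, d], ?_⟩
    ext1 i
    rcases skip2_cases k i with rfl | rfl | ⟨x, rfl⟩
    · rw [F0, a]
    · rw [F1 ⟨k, z⟩, ← a, hw.2]
    · rw [F2 ⟨k, z⟩, b]
  · rintro ⟨k, z⟩ hp
    rw [prod_ext k z _ A (F0 _ hp) (F1 _ hp) (F2 _ hp), ell_ext k z _ (F0 _ hp) (F1 _ hp) (F2 _ hp)]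
    ring

theorem pf_zero {K : Type*} [CommRing K] (A : Matrix (Fin 0) (Fin 0) K) : Pfaffian A = 1 := by
  simp [Pfaffian, ellFpfFin]

theorem pf_one {K : Type*} [CommRing K] (A : Matrix (Fin 1) (Fin 1) K) : Pfaffian A = 0 := by
  unfold Pfaffian
  apply Finset.sum_eq_zero
  intro z hz
  rw [Finset.mem_filter] at hz
  exact absurd (Subsingleton.elim _ _) (hz.2.1 0)

section Alt
variable {K V : Type*} [Field K] [AddCommGroup V] [Module K V]

theorem contract_multi (d : Module.Dual K V) : ∀ (N : ℕ) (v : Fin (N+1) → V),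
    CliffordAlgebra.contractLeft (Q := (0 : QuadraticForm K V)) d (ExteriorAlgebra.ιMulti K (N+1) v)
      = ∑ k : Fin (N+1), ((-1)^(k:ℕ) * d (v k)) • ExteriorAlgebra.ιMulti K N (fun x => v (k.succAbove x))
  | 0, v => by
    rw [ExteriorAlgebra.ιMulti_succ_apply]
    erw [CliffordAlgebra.contractLeft_ι_mul]
    simp
  | N+1, v => by
    rw [ExteriorAlgebra.ιMulti_succ_apply]
    erw [CliffordAlgebra.contractLeft_ι_mul]
    erw [contract_multi d N]
    rw [Finset.mul_sum, Fin.sum_univ_succ (n := N+1), sub_eq_add_neg, ← Finset.sum_neg_distrib]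
    congr 1
    · simp [Matrix.vecTail, Function.comp_def]
    · apply Finset.sum_congr rfl
      intro k _
      rw [ExteriorAlgebra.ιMulti_succ_apply]
      have : (Matrix.vecTail fun x => v (k.succ.succAbove x)) =
        fun x => Matrix.vecTail v (k.succAbove x) := by
        funext x; simp [Matrix.vecTail]
      rw [this]
      erw [mul_smul_comm]
      simp only [Matrix.vecTail, Function.comp, Fin.val_succ, pow_succ, Fin.succAbove_ne_zero_zero,
        Fin.succ_succAbove_zero, ne_eq]
      rw [← neg_smul]
      congr 1
      ring

theorem qproof (ω : LinearMap.BilinForm K V) (h : ∀ x, ω x x = 0) :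
    (-ω).toQuadraticMap = (0 : QuadraticForm K V) - 0 := by
  ext x; simp [h]

/-- The Pfaffian of a Gram matrix as an alternating map. -/
noncomputable def pfAlt (ω : LinearMap.BilinForm K V) (h : ∀ x, ω x x = 0) (N : ℕ) :
    V [⋀^Fin N]→ₗ[K] K :=
  ((ExteriorAlgebra.algebraMapInv (R := K) (M := V)).toLinearMap ∘ₗ
    (CliffordAlgebra.changeForm (qproof ω h))).compAlternatingMap (ExteriorAlgebra.ιMulti K N)

theorem pfAlt_expand (ω : LinearMap.BilinForm K V) (h : ∀ x, ω x x = 0) (N : ℕ)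
    (v : Fin (N+2) → V) : pfAlt ω h (N+2) v = ∑ k : Fin (N+1), (-1)^(k:ℕ) * ω (v 0) (v k.succ) *
      pfAlt ω h N (fun x => v (skip2 k x)) := by
  simp only [pfAlt, LinearMap.compAlternatingMap_apply, LinearMap.comp_apply]
  rw [ExteriorAlgebra.ιMulti_succ_apply]
  erw [CliffordAlgebra.changeForm_ι_mul]
  rw [← CliffordAlgebra.changeForm_contractLeft, contract_multi]
  simp only [map_sub, map_sum, map_smul, AlgHom.toLinearMap_apply, map_mul]
  rw [show ExteriorAlgebra.algebraMapInv ((CliffordAlgebra.ι (0 : QuadraticForm K V)) (v 0)) = 0 by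
    simp only [ExteriorAlgebra.algebraMapInv]
    erw [ExteriorAlgebra.lift_ι_apply]; simp]
  rw [zero_mul, zero_sub, ← Finset.sum_neg_distrib]
  apply Finset.sum_congr rfl
  intro k _
  simp [Matrix.vecTail, skip2, Function.comp_def]

theorem pfAlt_eq (ω : LinearMap.BilinForm K V) (h : ∀ x, ω x x = 0) : ∀ (N : ℕ)
    (v : Fin N → V), pfAlt ω h N v = Pfaffian (Matrix.of fun s t => ω (v s) (v t))
  | 0, v => by
    rw [pf_zero]
    simp only [pfAlt, LinearMap.compAlternatingMap_apply, LinearMap.comp_apply]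
    rw [ExteriorAlgebra.ιMulti_zero_apply]
    erw [CliffordAlgebra.changeForm_one]
    simp
  | 1, v => by
    rw [pf_one]
    simp only [pfAlt, LinearMap.compAlternatingMap_apply, LinearMap.comp_apply]
    rw [ExteriorAlgebra.ιMulti_succ_apply, ExteriorAlgebra.ιMulti_zero_apply, mul_one]
    erw [CliffordAlgebra.changeForm_ι]
    simp only [ExteriorAlgebra.algebraMapInv, AlgHom.toLinearMap_apply]
    erw [ExteriorAlgebra.lift_ι_apply]; simp
  | N+2, v => by
    rw [pfAlt_expand, pf_expand]
    apply Finset.sum_congr rfl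
    intro k _
    rw [pfAlt_eq]
    rfl

theorem pfAlt_ne_zero : ∀ (N : ℕ) {V : Type _} [AddCommGroup V] [Module K V]
    [FiniteDimensional K V]
    (_ : Module.finrank K V = N) (ω : LinearMap.BilinForm K V) (h : ∀ x, ω x x = 0)
    (_ : ∀ x, (∀ y, ω x y = 0) → x = 0), ∃ v, pfAlt ω h N v ≠ 0
  | 0, V, _, _, _, hd, ω, h, hnd => ⟨Fin.elim0, by rw [pfAlt_eq, pf_zero]; exact one_ne_zero⟩
  | 1, V, _, _, _, hd, ω, h, hnd => by
    exfalso
    obtain ⟨x, hx, hs⟩ := finrank_eq_one_iff'.mp hd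
    apply hx
    apply hnd
    intro y
    obtain ⟨c, rfl⟩ := hs y
    simp [h]
  | N+2, V, _, _, _, hd, ω, h, hnd => by
    have : Nontrivial V := Module.nontrivial_of_finrank_pos (R := K) (by omega)
    obtain ⟨x, hx⟩ := exists_ne (0 : V)
    have : ∃ y, ω x y ≠ 0 := by
      by_contra! hh
      exact hx (hnd x hh)
    obtain ⟨y, hy⟩ := this
    have hyx : ω y x = - ω x y := by
      have := h (x + y)
      simp [h] at this
      linear_combination this
    let f : V →ₗ[K] K × K := (ω x).prod (ω y)
    have hf : Function.Surjective f := by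
      rintro ⟨a, b⟩
      refine ⟨(a / ω x y) • y - (b / ω x y) • x, ?_⟩
      simp [f, h, hyx, hy]
    let W := LinearMap.ker f
    have hW : Module.finrank K W = N := by
      have := LinearMap.finrank_range_add_finrank_ker f
      rw [LinearMap.range_eq_top.mpr hf, finrank_top, Module.finrank_prod, Module.finrank_self] at this
      change 1 + 1 + Module.finrank K W = _ at this
      omega
    have memW : ∀ w : W, ω x w = 0 ∧ ω y w = 0 := by
      intro w
      have := w.2
      simpa [W, f, LinearMap.mem_ker] using this
    have anti : ∀ a b, ω a b = - ω b a := by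
      intro a b
      have := h (a + b)
      simp [h] at this
      linear_combination this
    have hres : ∀ a b : W, ω.restrict W a b = ω a b := fun _ _ => rfl
    have hr0 : ∀ w, ω.restrict W w w = 0 := fun w => by rw [hres]; exact h w
    obtain ⟨u, hu⟩ := pfAlt_ne_zero N hW (ω.restrict W) hr0 (by
      intro w hw
      apply Subtype.ext
      apply hnd
      intro v
      have hvW : v - ((ω x v / ω x y) • y - (ω y v / ω x y) • x) ∈ W := by
        simp [W, f, LinearMap.mem_ker, h, hyx, hy]
      have h1 := hw ⟨_, hvW⟩
      have h2 : ω w x = 0 := by rw [anti, (memW w).1, neg_zero]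
      have h3 : ω w y = 0 := by rw [anti, (memW w).2, neg_zero]
      rw [hres] at h1
      simpa [h2, h3] using h1)
    refine ⟨Fin.cons x (Fin.cons y (fun s => (u s : V))), ?_⟩
    rw [pfAlt_expand, Fin.sum_univ_succ, Finset.sum_eq_zero]
    · rw [pfAlt_eq] at hu ⊢
      simp [skip2]
      exact ⟨hy, hu⟩
    · intro k _
      simp [(memW (u k)).1]

end Alt

theorem pf_ne_zero_iff {K : Type*} [Field K] {N : ℕ} (B : Matrix (Fin N) (Fin N) K)
    (hB : B.transpose = -B) (hB0 : ∀ i, B i i = 0) : Pfaffian B ≠ 0 ↔ B.det ≠ 0 := by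
  classical
  have hskew : ∀ a b, B a b = - B b a := by
    intro a b
    have := congrFun (congrFun hB b) a
    simpa using this
  have h : ∀ x, Matrix.toBilin' B x x = 0 := by
    intro x
    rw [Matrix.toBilin'_apply]
    rw [← Finset.sum_product']
    refine Finset.sum_involution (fun p _ => (p.2, p.1)) ?_ ?_ ?_ ?_
    · rintro ⟨a, b⟩ _
      simp only
      rw [hskew a b]; ring
    · rintro ⟨a, b⟩ _ hne heq
      simp only [Prod.mk.injEq] at heq
      apply hne
      simp [heq.1, hB0]
    · simp
    · simp
  have hpf : ∀ v, pfAlt (Matrix.toBilin' B) h N v =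
      Pfaffian (Matrix.of fun s t => Matrix.toBilin' B (v s) (v t)) := pfAlt_eq _ h N
  have he : pfAlt (Matrix.toBilin' B) h N (fun s => Pi.single s 1) = Pfaffian B := by
    rw [hpf]; congr 1; ext s t; simp
  constructor
  · intro hp hdet
    obtain ⟨w, hw, hw0⟩ := Matrix.exists_vecMul_eq_zero_iff.mpr hdet
    obtain ⟨a, ha⟩ := Function.ne_iff.mp hw
    have e1 : pfAlt (Matrix.toBilin' B) h N (Function.update (fun s => Pi.single s 1) a w) =
        w a * Pfaffian B := by
      have : w = ∑ b, w b • (Pi.single b 1 : Fin N → K) := by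
        ext c; simp [Finset.sum_apply, Pi.single_apply]
      conv_lhs => rw [this]
      rw [AlternatingMap.map_update_sum, Finset.sum_eq_single a]
      · rw [AlternatingMap.map_update_smul, Function.update_eq_self, he, smul_eq_mul]
      · intro b _ hb
        rw [AlternatingMap.map_update_smul]
        have := (pfAlt (Matrix.toBilin' B) h N).map_update_self (fun s => Pi.single s 1) (Ne.symm hb)
        rw [this, smul_zero]
      · simp
    have hleft : ∀ y, Matrix.toBilin' B w y = 0 := by
      intro y
      rw [Matrix.toBilin'_apply', Matrix.dotProduct_mulVec, hw0, zero_dotProduct]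
    have e2 : pfAlt (Matrix.toBilin' B) h N (Function.update (fun s => Pi.single s 1) a w) = 0 := by
      rw [hpf]
      unfold Pfaffian
      apply Finset.sum_eq_zero
      intro z hz
      rw [Finset.mem_filter] at hz
      apply mul_eq_zero_of_right
      have hright : ∀ y, Matrix.toBilin' B y w = 0 := by
        intro y
        have h1 := h (w + y)
        simpa [h, hleft] using h1
      rcases lt_or_gt_of_ne (hz.2.1 a) with hlt | hlt
      · apply Finset.prod_eq_zero (i := a)
        · simpa using hlt
        · simp [hright]
      · apply Finset.prod_eq_zero (i := z a)
        · simpa [hz.2.2 a] using hlt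
        · simp [hz.2.2 a, hleft]
    rw [e1] at e2
    exact (mul_ne_zero ha hp) e2
  · intro hdet hp
    obtain ⟨v, hv⟩ := pfAlt_ne_zero (K := K) N (V := Fin N → K) (by simp) (Matrix.toBilin' B) h (by
      intro x hx
      by_contra hne
      apply hdet
      rw [← Matrix.exists_vecMul_eq_zero_iff]
      refine ⟨x, hne, ?_⟩
      ext c
      have := hx (Pi.single c 1)
      rw [Matrix.toBilin'_apply', Matrix.dotProduct_mulVec] at this
      simpa using this)
    apply hv
    rw [(pfAlt (Matrix.toBilin' B) h N).eq_smul_basis_det (Pi.basisFun K (Fin N))]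
    have : pfAlt (Matrix.toBilin' B) h N (Pi.basisFun K (Fin N)) = 0 := by
      rw [← hp, ← he]; congr 1; ext1 s; simp
    simp [this]

theorem main_aux {K : Type*} [Field K] (n : ℕ)
    (i j : ℕ) (hji : j ≤ i) (hin : i ≤ n) (hjn : j ≤ n)
    (r : ℕ) (A : Matrix (Fin n) (Fin n) K) (hA : A ∈ MatSS K n)
    (pfiff : ∀ R : Finset (Fin n), Pfaffian (A.submatrix (fun s => R.orderEmbOfFin rfl s)
          fun t => R.orderEmbOfFin rfl t) ≠ 0 ↔ (A.submatrix (fun s => R.orderEmbOfFin rfl s)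
          fun t => R.orderEmbOfFin rfl t).det ≠ 0)
    (pfeven : ∀ (N : ℕ) (B : Matrix (Fin N) (Fin N) K), Pfaffian B ≠ 0 → Even N) :
    (A.submatrix (Fin.castLE hin) (Fin.castLE hjn)).rank ≤ r ↔
      ∀ R : Finset (Fin n), R.Nonempty → Even R.card → (∀ a ∈ R, (a : ℕ) + 1 ≤ i) →
        r < (R.filter fun a : Fin n => (a : ℕ) + 1 ≤ j).card →
        Pfaffian (A.submatrix (fun s => R.orderEmbOfFin rfl s)
          fun t => R.orderEmbOfFin rfl t) = 0 := by
  classical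
  have hskew : ∀ a b, A a b = - A b a := by
    intro a b
    have := congrFun (congrFun hA.1 b) a
    simpa using this
  -- columns
  let c : Fin n → (Fin i → K) := fun b a => A (Fin.castLE hin a) b
  have hrange : Set.range (A.submatrix (Fin.castLE hin) (Fin.castLE hjn)).col
      = c '' {b | (b : ℕ) + 1 ≤ j} := by
    ext u
    constructor
    · rintro ⟨b, rfl⟩
      exact ⟨Fin.castLE hjn b, by have := b.2; simp, rfl⟩
    · rintro ⟨b, hb, rfl⟩
      exact ⟨⟨b, by simp at hb; omega⟩, rfl⟩
  have hrank : (A.submatrix (Fin.castLE hin) (Fin.castLE hjn)).rank =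
      Module.finrank K (Submodule.span K (c '' {b | (b : ℕ) + 1 ≤ j})) := by
    rw [Matrix.rank_eq_finrank_span_cols, hrange]
  -- determinant nonzero iff
  have hdet : ∀ R : Finset (Fin n), (A.submatrix (fun s => R.orderEmbOfFin rfl s)
          fun t => R.orderEmbOfFin rfl t).det = 0 ↔ ∃ x : Fin n → K, (∃ s ∈ R, x s ≠ 0) ∧
            ∀ a ∈ R, ∑ s ∈ R, A a s * x s = 0 := by
    intro R
    rw [← Matrix.exists_mulVec_eq_zero_iff]
    have hsum : ∀ g : Fin n → K, ∑ s : Fin R.card, g (R.orderEmbOfFin rfl s) = ∑ s ∈ R, g s := by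
      intro g
      have := Finset.sum_map Finset.univ (R.orderEmbOfFin rfl).toEmbedding g
      rw [Finset.map_orderEmbOfFin_univ] at this
      exact this.symm
    have hmem : ∀ a, a ∈ R ↔ ∃ s, R.orderEmbOfFin rfl s = a := by
      intro a
      have := Finset.range_orderEmbOfFin R rfl
      rw [← Finset.mem_coe, ← this]; rfl
    constructor
    · rintro ⟨v, hv, hv0⟩
      have hext : ∀ s, Function.extend (R.orderEmbOfFin rfl) v 0 (R.orderEmbOfFin rfl s) = v s :=
        fun s => (R.orderEmbOfFin rfl).injective.extend_apply v 0 s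
      refine ⟨Function.extend (R.orderEmbOfFin rfl) v 0, ?_, ?_⟩
      · obtain ⟨s, hs⟩ := Function.ne_iff.mp hv
        exact ⟨_, (hmem _).mpr ⟨s, rfl⟩, by rw [hext]; exact hs⟩
      · intro a ha
        obtain ⟨t, rfl⟩ := (hmem a).mp ha
        rw [← hsum]
        simp_rw [hext]
        exact congrFun hv0 t
    · rintro ⟨x, ⟨s, hs, hxs⟩, h0⟩
      obtain ⟨t, rfl⟩ := (hmem s).mp hs
      refine ⟨fun s => x (R.orderEmbOfFin rfl s), fun h => hxs (congrFun h t), ?_⟩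
      ext t
      have := h0 _ ((hmem _).mpr ⟨t, rfl⟩)
      rw [← hsum] at this
      exact this
  constructor
  · intro hr R _ _ hRi hRj
    by_contra hne
    have hd := (pfiff R).mp hne
    rw [Ne, hdet] at hd
    have hli : LinearIndepOn K c (R : Set (Fin n)) := by
      rw [linearIndepOn_finset_iff]
      intro g hg s hs
      by_contra hgs
      apply hd
      refine ⟨g, ⟨s, hs, hgs⟩, ?_⟩
      intro a ha
      have := congrFun hg ⟨a, hRi a ha⟩
      simp only [Finset.sum_apply, Pi.smul_apply, smul_eq_mul, c, Pi.zero_apply] at this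
      rw [← this]
      apply Finset.sum_congr rfl
      intro t _
      rw [mul_comm]; rfl
    have hli2 : LinearIndepOn K c ((R.filter fun a : Fin n => (a : ℕ) + 1 ≤ j : Finset (Fin n)) :
      Set (Fin n)) := hli.mono (Finset.coe_subset.mpr (Finset.filter_subset _ _))
    have h1 := finrank_span_eq_card hli2
    have h2 : Submodule.span K (Set.range fun x : ((R.filter fun a : Fin n => (a : ℕ) + 1 ≤ j :
        Finset (Fin n)) : Set (Fin n)) => c x) ≤ Submodule.span K (c '' {b | (b : ℕ) + 1 ≤ j}) := by
      apply Submodule.span_mono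
      rintro _ ⟨⟨x, hx⟩, rfl⟩
      simp at hx
      exact ⟨x, hx.2, rfl⟩
    have h3 := Submodule.finrank_mono h2
    rw [h1, ← hrank] at h3
    simp only [Finset.coe_sort_coe, Fintype.card_coe] at h3
    omega
  · intro hall
    by_contra! hlt
    obtain ⟨J, hJ, -, hJs, hJl⟩ := exists_linearIndepOn_extension (K := K) (v := c)
      (s := ∅) (t := {b | (b : ℕ) + 1 ≤ j}) (linearIndepOn_empty _ _) (Set.empty_subset _)
    obtain ⟨S, hS, hJS, hSs, hSl⟩ := exists_linearIndepOn_extension (K := K) (v := c)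
      (s := J) (t := {b | (b : ℕ) + 1 ≤ i}) hJl (fun b hb => by
        have := hJ hb; simp at this ⊢; omega)
    set R := S.toFinset with hR
    have hRS : ∀ a, a ∈ R ↔ a ∈ S := by simp [hR]
    have hcard : r < (R.filter fun a : Fin n => (a : ℕ) + 1 ≤ j).card := by
      have h1 : Submodule.span K (c '' {b | (b : ℕ) + 1 ≤ j}) ≤
          Submodule.span K ((J.toFinset.image c : Finset _) : Set (Fin i → K)) := by
        rw [Submodule.span_le]
        simpa using hJs
      have h2 := Submodule.finrank_mono h1
      have h3 := finrank_span_finset_le_card (R := K) (J.toFinset.image c)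
      have h4 : (J.toFinset.image c).card ≤ J.toFinset.card := Finset.card_image_le
      have h5 : J.toFinset ⊆ R.filter fun a : Fin n => (a : ℕ) + 1 ≤ j := by
        intro b hb
        rw [Set.mem_toFinset] at hb
        rw [Finset.mem_filter, hRS]
        exact ⟨hJS hb, hJ hb⟩
      have h6 := Finset.card_le_card h5
      rw [hrank] at hlt
      unfold Set.finrank at h3
      omega
    have hRdet : (A.submatrix (fun s => R.orderEmbOfFin rfl s)
          fun t => R.orderEmbOfFin rfl t).det ≠ 0 := by
      rw [Ne, hdet]
      rintro ⟨x, ⟨s, hs, hxs⟩, h0⟩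
      -- functional
      have hSi : ∀ s ∈ R, (s : ℕ) < i := fun s hs => hS ((hRS s).mp hs)
      let φ : (Fin i → K) →ₗ[K] K :=
        ∑ s : R, x s • LinearMap.proj (R := K) (φ := fun _ : Fin i => K) ⟨s.1, hSi s.1 s.2⟩
      have hφ : ∀ b, φ (c b) = - ∑ s ∈ R, A b s * x s := by
        intro b
        rw [← Finset.sum_coe_sort R, ← Finset.sum_neg_distrib]
        simp only [φ, LinearMap.sum_apply, LinearMap.smul_apply, LinearMap.proj_apply, smul_eq_mul]
        apply Finset.sum_congr rfl
        intro t _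
        rw [hskew b t]
        simp only [c]
        change x t * A t b = _
        ring
      have hφ0 : Submodule.span K (c '' S) ≤ LinearMap.ker φ := by
        rw [Submodule.span_le]
        rintro _ ⟨b, hb, rfl⟩
        change φ (c b) = 0
        rw [hφ, h0 b ((hRS b).mpr hb), neg_zero]
      have hall0 : ∀ b : Fin n, (b : ℕ) + 1 ≤ i → ∑ s ∈ R, A b s * x s = 0 := by
        intro b hb
        have := hφ0 (hSs ⟨b, hb, rfl⟩)
        have : φ (c b) = 0 := this
        rw [hφ] at this
        simpa using this
      have hSl' : LinearIndepOn K c (R : Set (Fin n)) := by rw [hR, Set.coe_toFinset]; exact hSl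
      rw [linearIndepOn_finset_iff] at hSl'
      apply hxs
      refine hSl' x ?_ s hs
      ext a
      have := hall0 (Fin.castLE hin a) a.2
      simp only [Finset.sum_apply, Pi.smul_apply, smul_eq_mul, c, Pi.zero_apply]
      rw [← this]
      apply Finset.sum_congr rfl
      intro t _
      rw [mul_comm]
    have hp := (pfiff R).mpr hRdet
    apply hp
    refine hall R ?_ (pfeven _ _ hp) (fun a ha => hS ((hRS a).mp ha)) hcard
    have : 0 < (R.filter fun a : Fin n => (a : ℕ) + 1 ≤ j).card := by omega
    obtain ⟨a, ha⟩ := Finset.card_pos.mp this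
    exact ⟨a, (Finset.mem_filter.mp ha).1⟩

theorem pf_even {K : Type*} [Field K] : ∀ (N : ℕ) (B : Matrix (Fin N) (Fin N) K),
    Pfaffian B ≠ 0 → Even N
  | 0, _, _ => ⟨0, rfl⟩
  | 1, B, h => absurd (pf_one B) h
  | N+2, B, h => by
    rw [pf_expand] at h
    obtain ⟨k, _, hk⟩ := Finset.exists_ne_zero_of_sum_ne_zero h
    exact (pf_even N _ (right_ne_zero_of_mul hk)).add (by decide)

/-- For `A ∈ Mat^ss_n(K)`, `i ≥ j` in `[n]`, and `r ≥ 0`: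
`rank A_{[i][j]} ≤ r` iff `pf(A_{RR}) = 0` for every nonempty even-size `R ⊆ [i]`
with `|R ∩ [j]| > r`. -/
theorem statement4 (K : Type*) [Field K] [IsAlgClosed K] (n : ℕ) (hn : 1 ≤ n)
    (i j : ℕ) (hi1 : 1 ≤ i) (hj1 : 1 ≤ j) (hji : j ≤ i) (hin : i ≤ n) (hjn : j ≤ n)
    (r : ℕ) (A : Matrix (Fin n) (Fin n) K) (hA : A ∈ MatSS K n) :
    (A.submatrix (Fin.castLE hin) (Fin.castLE hjn)).rank ≤ r ↔
      ∀ R : Finset (Fin n), R.Nonempty → Even R.card → (∀ a ∈ R, (a : ℕ) + 1 ≤ i) →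
        r < (R.filter fun a : Fin n => (a : ℕ) + 1 ≤ j).card →
        Pfaffian (A.submatrix (fun s => R.orderEmbOfFin rfl s)
          fun t => R.orderEmbOfFin rfl t) = 0 := by
  refine main_aux n i j hji hin hjn r A hA (fun R => ?_) pf_even
  apply pf_ne_zero_iff
  · ext a b
    have := congrFun (congrFun hA.1 (R.orderEmbOfFin rfl a)) (R.orderEmbOfFin rfl b)
    simpa using this
  · intro a
    exact hA.2 _

end Paper
end
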